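/- arXiv:2412.20809 — 4 statements merged into one kernel-verified Lean document; each statement's English description precedes it below -/
import Mathlib

section
/- Let k be an algebraically closed field of characteristic 0, N ≥ 7, and let λ be an orthogonal partition of N with λ₁ ≥ 3 whose number of parts p satisfies 2m := N − p < ⌊N/2⌋. Then the Zariski closure in Mat_N(k) of the set {x + y : x, y ∈ O_λ ∩ so_N(k)} equals {M ∈ so_N(k) : rank(M) ≤ 4m}; that is, the conical secant variety of this nilpotent SO_N-orbit is the skew-symmetric determinantal variety Sk_{4m}(N). -/
open Matrix

noncomputable section

/-- The Zariski closure of a set of `N × N` matrices. -/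
def zClosure {k : Type*} [CommRing k] {N : ℕ}
    (S : Set (Matrix (Fin N) (Fin N) k)) : Set (Matrix (Fin N) (Fin N) k) :=
  {M | ∀ P : MvPolynomial (Fin N × Fin N) k,
      (∀ x ∈ S, MvPolynomial.eval (fun q => x q.1 q.2) P = 0) →
      MvPolynomial.eval (fun q => M q.1 q.2) P = 0}

/-- The set of nilpotent matrices of Jordan type `lam`. -/
def jordanOrbit (k : Type*) [Field k] (N : ℕ) {p : ℕ} (lam : Fin p → ℕ) :
    Set (Matrix (Fin N) (Fin N) k) :=
  {M | ∀ i : ℕ, 1 ≤ i → (M ^ i).rank = ∑ l, (lam l - i)}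

/-- The orthogonal Lie algebra `so_N(k)`: skew-symmetric matrices. -/
def soSet (k : Type*) [CommRing k] (N : ℕ) : Set (Matrix (Fin N) (Fin N) k) :=
  {M | Mᵀ = -M}

/-- A partition is orthogonal if each (nonzero) even part occurs with even multiplicity. -/
def IsOrthogonalParts {p : ℕ} (lam : Fin p → ℕ) : Prop :=
  ∀ m : ℕ, 0 < m → Even m → Even ((Finset.univ.filter (fun l => lam l = m)).card)

section Density

variable {k σ : Type*} [Field k]

theorem MvPolynomial.derivative_aeval [Fintype σ] (C : σ → Polynomial k) (P : MvPolynomial σ k) :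
    Polynomial.derivative (MvPolynomial.aeval C P) =
      ∑ i, MvPolynomial.aeval C (MvPolynomial.pderiv i P) * Polynomial.derivative (C i) := by
  classical
  induction P using MvPolynomial.induction_on with
  | C a => simp
  | add p q hp hq => simp [hp, hq, add_mul, Finset.sum_add_distrib]
  | mul_X p j hp =>
    have hterm : ∀ i, MvPolynomial.aeval C (MvPolynomial.pderiv i (p * MvPolynomial.X j)) *
        Polynomial.derivative (C i) =
        MvPolynomial.aeval C (MvPolynomial.pderiv i p) * Polynomial.derivative (C i) * C j +
          (if i = j then MvPolynomial.aeval C p * Polynomial.derivative (C i) else 0) := by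
      intro i
      by_cases hij : i = j
      · subst hij
        simp only [MvPolynomial.pderiv_mul, MvPolynomial.pderiv_X_self, map_add, map_mul, map_one,
          MvPolynomial.aeval_X, if_true]
        ring
      · simp only [MvPolynomial.pderiv_mul, MvPolynomial.pderiv_X_of_ne (Ne.symm hij), map_add,
          map_mul, map_zero, MvPolynomial.aeval_X, if_neg hij]
        ring
    rw [Finset.sum_congr rfl fun i _ => hterm i, Finset.sum_add_distrib, ← Finset.sum_mul, ← hp]
    simp

/-- If `P` vanishes at almost all points of a polynomial curve, its differential kills the tangent
vector of the curve at `0`. -/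
theorem MvPolynomial.sum_pderiv_mul_tangent_eq_zero [Infinite k] [Fintype σ]
    (P : MvPolynomial σ k) (C : σ → Polynomial k) (F : Polynomial k) (hF : F ≠ 0)
    (h : ∀ s, F.eval s ≠ 0 → MvPolynomial.eval (fun i => (C i).eval s) P = 0) :
    ∑ i, MvPolynomial.eval (fun i => (C i).eval 0) (MvPolynomial.pderiv i P) *
      (Polynomial.derivative (C i)).eval 0 = 0 := by
  have key : ∀ (Q : MvPolynomial σ k) (s : k),
      (MvPolynomial.aeval C Q).eval s = MvPolynomial.eval (fun i => (C i).eval s) Q := by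
    intro Q s
    induction Q using MvPolynomial.induction_on with
    | C a => simp
    | add p q hp hq => simp [hp, hq]
    | mul_X p j hp => simp [hp]
  have h0 : MvPolynomial.aeval C P = 0 := by
    have : F * MvPolynomial.aeval C P = 0 := by
      refine Polynomial.funext fun s => ?_
      by_cases hs : F.eval s = 0
      · simp [hs]
      · simp [key, h s hs]
    exact (mul_eq_zero.1 this).resolve_left hF
  have h1 := congrArg (fun q => (Polynomial.derivative q).eval 0) h0
  simpa [MvPolynomial.derivative_aeval, Polynomial.eval_finsetSum, key] using h1

theorem MvPolynomial.totalDegree_pderiv_le (P : MvPolynomial σ k) (i : σ) (n : ℕ)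
    (h : P.totalDegree ≤ n + 1) : (MvPolynomial.pderiv i P).totalDegree ≤ n := by
  classical
  refine Finset.sup_le fun d hd => ?_
  rw [MvPolynomial.mem_support_iff, MvPolynomial.coeff_pderiv] at hd
  have h1 := (MvPolynomial.le_totalDegree
    (MvPolynomial.mem_support_iff.2 (left_ne_zero_of_mul hd))).trans h
  rw [Finsupp.sum_add_index' (fun _ => rfl) (fun _ _ _ => rfl), Finsupp.sum_single_index rfl] at h1
  omega

theorem MvPolynomial.eq_C_of_pderiv_eq_zero [CharZero k] (P : MvPolynomial σ k)
    (h : ∀ i, MvPolynomial.pderiv i P = 0) : P = MvPolynomial.C (MvPolynomial.coeff 0 P) := by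
  classical
  ext d
  rw [MvPolynomial.coeff_C]
  split_ifs with hd
  · rw [← hd]
  · obtain ⟨i, hi⟩ : ∃ i, d i ≠ 0 := by
      by_contra! H
      exact hd (Finsupp.ext fun i => (H i).symm)
    have h1 := congrArg (MvPolynomial.coeff (d - Finsupp.single i 1)) (h i)
    have hle : Finsupp.single i 1 ≤ d := by
      simpa [Finsupp.single_le_iff] using Nat.one_le_iff_ne_zero.2 hi
    rw [MvPolynomial.coeff_pderiv, tsub_add_cancel_of_le hle, MvPolynomial.coeff_zero] at h1
    refine (mul_eq_zero.1 h1).resolve_right ?_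
    norm_cast

/-- A nonempty set such that the gradient of every polynomial vanishing on it vanishes on it is
Zariski dense. -/
theorem MvPolynomial.eq_zero_of_gradient [CharZero k] (T : Set (σ → k)) (hT : T.Nonempty)
    (h : ∀ P : MvPolynomial σ k, (∀ t ∈ T, MvPolynomial.eval t P = 0) →
      ∀ t ∈ T, ∀ i, MvPolynomial.eval t (MvPolynomial.pderiv i P) = 0)
    (P : MvPolynomial σ k) (hP : ∀ t ∈ T, MvPolynomial.eval t P = 0) : P = 0 := by
  have key : ∀ n : ℕ, ∀ P : MvPolynomial σ k, P.totalDegree ≤ n →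
      (∀ t ∈ T, MvPolynomial.eval t P = 0) → P = 0 := by
    have const : ∀ P : MvPolynomial σ k, P = MvPolynomial.C (MvPolynomial.coeff 0 P) →
        (∀ t ∈ T, MvPolynomial.eval t P = 0) → P = 0 := by
      intro P hc hP
      obtain ⟨t, ht⟩ := hT
      have := hP t ht
      rw [hc, MvPolynomial.eval_C] at this
      rw [hc, this, MvPolynomial.C_0]
    intro n
    induction n with
    | zero =>
      intro P hd hP
      exact const P (MvPolynomial.totalDegree_eq_zero_iff_eq_C.1 (Nat.le_zero.1 hd)) hP
    | succ n ih =>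
      intro P hd hP
      refine const P (MvPolynomial.eq_C_of_pderiv_eq_zero P fun i => ?_) hP
      exact ih _ (MvPolynomial.totalDegree_pderiv_le P i n hd) fun t ht => h P hP t ht i
  exact key _ P le_rfl hP

end Density

section SkewNormalForm

variable {k : Type*} [Field k]

theorem Matrix.rank_add_two_le {n : Type*} [Fintype n] [DecidableEq n] (M M' : Matrix n n k)
    (hle : LinearMap.range M'.mulVecLin ≤ LinearMap.range M.mulVecLin) {a b : n}
    (haa : M a a = 0) (hbb : M b b = 0) (hab : M a b ≠ 0) (hba : M b a ≠ 0)
    (ha : ∀ j, M' a j = 0) (hb : ∀ j, M' b j = 0) : M'.rank + 2 ≤ M.rank := by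
  let f : LinearMap.range M.mulVecLin →ₗ[k] k × k :=
    ((LinearMap.proj (R := k) (φ := fun _ : n => k) a).prod (LinearMap.proj b)).comp
      (LinearMap.range M.mulVecLin).subtype
  have hsurj : Function.Surjective f := by
    rintro ⟨s, t⟩
    refine ⟨⟨M *ᵥ (Pi.single b (s / M a b) + Pi.single a (t / M b a)), ⟨_, rfl⟩⟩, ?_⟩
    simp [f, Matrix.mulVec_add, haa, hbb]
    constructor <;> field_simp
  have hker : (LinearMap.range M'.mulVecLin).comap (LinearMap.range M.mulVecLin).subtype ≤
      LinearMap.ker f := by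
    rintro ⟨x, hx⟩ ⟨y, hy⟩
    have hxy : x = M' *ᵥ y := hy.symm
    simp [f, hxy, Matrix.mulVec, dotProduct, ha, hb]
  have h1 := LinearMap.finrank_range_add_finrank_ker f
  rw [LinearMap.range_eq_top.2 hsurj, finrank_top, Module.finrank_prod, Module.finrank_self] at h1
  have h2 := Submodule.finrank_mono hker
  rw [(Submodule.comapSubtypeEquivOfLe hle).finrank_eq] at h2
  unfold Matrix.rank
  omega

theorem Matrix.exists_skew_decomposition [CharZero k] {n : Type*} [Fintype n] [DecidableEq n]
    (r : ℕ) (M : Matrix n n k) (hM : Mᵀ = -M) (hr : M.rank ≤ 2 * r) :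
    ∃ U V : Matrix n (Fin r) k, M = V * Uᵀ - U * Vᵀ := by
  induction r generalizing M with
  | zero =>
    have : M = 0 := by
      have h0 : M.rank = 0 := by omega
      rw [Matrix.rank, Submodule.finrank_eq_zero, LinearMap.range_eq_bot] at h0
      ext i j
      simpa using congrFun (LinearMap.congr_fun h0 (Pi.single j 1)) i
    exact ⟨0, 0, by simp [this]⟩
  | succ r ih =>
    by_cases h0 : M = 0
    · exact ⟨0, 0, by simp [h0]⟩
    obtain ⟨a, b, hab⟩ : ∃ a b, M a b ≠ 0 := by
      by_contra! H
      exact h0 (Matrix.ext H)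
    have hs : ∀ i j, M j i = -M i j := fun i j => congrFun (congrFun hM i) j
    have hd : ∀ i, M i i = 0 := fun i => self_eq_neg.1 (hs i i)
    let u : n → k := fun i => M i a
    let v : n → k := fun i => -(M i b) / M a b
    let M' : Matrix n n k := M - (vecMulVec v u - vecMulVec u v)
    have hM' : M'ᵀ = -M' := by
      ext i j
      simp only [M', Matrix.transpose_apply, Matrix.sub_apply, Matrix.neg_apply, vecMulVec_apply,
        hs i j]
      ring
    have hle : LinearMap.range M'.mulVecLin ≤ LinearMap.range M.mulVecLin := by
      rintro _ ⟨y, rfl⟩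
      refine ⟨y + Pi.single b ((u ⬝ᵥ y) / M a b) + Pi.single a (v ⬝ᵥ y), ?_⟩
      ext i
      simp only [Matrix.mulVecLin_apply, M', Matrix.sub_mulVec, Matrix.mulVec_add,
        Matrix.vecMulVec_mulVec, Pi.add_apply, Pi.sub_apply, Matrix.mulVec_single]
      simp [u, v]
      field_simp
      ring
    have hrank := Matrix.rank_add_two_le M M' hle (hd a) (hd b) hab
      (by rw [hs a b]; exact neg_ne_zero.2 hab)
      (by
        intro j
        simp only [M', Matrix.sub_apply, vecMulVec_apply, u, v, hd, hs a j]
        field_simp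
        ring)
      (by
        intro j
        simp only [M', Matrix.sub_apply, vecMulVec_apply, u, v, hd, hs a b, hs b j]
        field_simp
        ring)
    obtain ⟨U, V, hUV⟩ := ih M' hM' (by omega)
    refine ⟨Matrix.of fun i => Fin.cons (u i) (U i), Matrix.of fun i => Fin.cons (v i) (V i), ?_⟩
    have : M = M' + (vecMulVec v u - vecMulVec u v) := by simp [M']
    rw [this, hUV]
    ext i j
    simp [Matrix.mul_apply, Fin.sum_univ_succ, vecMulVec_apply]
    ring

theorem Matrix.exists_eq_mul_J_mul_transpose [CharZero k] {n : Type*} [Fintype n] [DecidableEq n]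
    (r : ℕ) (M : Matrix n n k) (hM : Mᵀ = -M) (hr : M.rank ≤ 2 * r) :
    ∃ A : Matrix n (Fin r ⊕ Fin r) k, M = A * J (Fin r) k * Aᵀ := by
  obtain ⟨U, V, h⟩ := Matrix.exists_skew_decomposition r M hM hr
  refine ⟨Matrix.fromCols U V, ?_⟩
  rw [h, Matrix.J, Matrix.fromCols_mul_fromBlocks, Matrix.transpose_fromCols,
    Matrix.fromCols_mul_fromRows]
  simp [sub_eq_add_neg]

/-- A symplectic change of coordinates to the standard skew form. -/
theorem Matrix.exists_skew_equiv_J [CharZero k] {n : Type*} [Fintype n] [DecidableEq n]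
    (r : ℕ) (hn : Fintype.card n = 2 * r) (Ω : Matrix n n k) (hΩ : Ωᵀ = -Ω) (hu : IsUnit Ω.det) :
    ∃ (K : Matrix n (Fin r ⊕ Fin r) k) (K' : Matrix (Fin r ⊕ Fin r) n k),
      K * K' = 1 ∧ K' * K = 1 ∧ Ω = K * J (Fin r) k * Kᵀ := by
  obtain ⟨K, hK⟩ := Matrix.exists_eq_mul_J_mul_transpose r Ω hΩ
    (by rw [← hn]; exact Matrix.rank_le_card_width Ω)
  have h1 : K * (J (Fin r) k * Kᵀ * Ω⁻¹) = 1 := by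
    rw [← Matrix.mul_assoc, ← Matrix.mul_assoc, ← hK, Matrix.mul_nonsing_inv _ hu]
  refine ⟨K, _, h1, ?_, hK⟩
  exact (Matrix.mul_eq_one_comm_of_card_eq _ _ _
    (by rw [hn, Fintype.card_sum, Fintype.card_fin]; omega)).1 h1

theorem Matrix.exists_eq_mul_skew_mul_transpose [CharZero k] {n ι : Type*} [Fintype n]
    [DecidableEq n] [Fintype ι] [DecidableEq ι]
    (r : ℕ) (hι : Fintype.card ι = 2 * r) (Ω : Matrix ι ι k) (hΩ : Ωᵀ = -Ω) (hu : IsUnit Ω.det)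
    (M : Matrix n n k) (hM : Mᵀ = -M) (hr : M.rank ≤ 2 * r) :
    ∃ A : Matrix n ι k, M = A * Ω * Aᵀ := by
  obtain ⟨A, hA⟩ := Matrix.exists_eq_mul_J_mul_transpose r M hM hr
  obtain ⟨K, K', -, h2, hK⟩ := Matrix.exists_skew_equiv_J r hι Ω hΩ hu
  refine ⟨A * K', ?_⟩
  have h3 : Kᵀ * K'ᵀ = 1 := by rw [← Matrix.transpose_mul, h2, Matrix.transpose_one]
  calc M = A * (K' * K) * J (Fin r) k * (Kᵀ * K'ᵀ) * Aᵀ := by rw [h2, h3, hA]; simp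
    _ = _ := by rw [hK, Matrix.transpose_mul]; simp only [Matrix.mul_assoc]

end SkewNormalForm

section SymplecticNilpotent

variable {k : Type*} [Field k]

theorem Matrix.rank_fromBlocks_zero_zero {m n m' n' : Type*} [Fintype m] [Fintype n] [Fintype m']
    [Fintype n'] (A : Matrix m n k) (D : Matrix m' n' k) :
    (fromBlocks A 0 0 D).rank = A.rank + D.rank := by
  let φ : (LinearMap.range A.mulVecLin × LinearMap.range D.mulVecLin) →ₗ[k] (m ⊕ m' → k) :=
    (LinearEquiv.sumArrowLequivProdArrow m m' k k).symm.toLinearMap.comp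
      ((LinearMap.range A.mulVecLin).subtype.prodMap (LinearMap.range D.mulVecLin).subtype)
  have hinj : Function.Injective φ := by
    refine (LinearEquiv.sumArrowLequivProdArrow m m' k k).symm.injective.comp ?_
    exact Function.Injective.prodMap Subtype.val_injective Subtype.val_injective
  have hrange : LinearMap.range φ = LinearMap.range (fromBlocks A 0 0 D).mulVecLin := by
    apply le_antisymm
    · rintro _ ⟨⟨⟨_, ⟨x, rfl⟩⟩, ⟨_, ⟨y, rfl⟩⟩⟩, rfl⟩
      refine ⟨Sum.elim x y, ?_⟩
      ext (i | i) <;> simp [φ, fromBlocks_mulVec]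
    · rintro _ ⟨x, rfl⟩
      refine ⟨⟨⟨A *ᵥ (x ∘ Sum.inl), ⟨_, rfl⟩⟩, ⟨D *ᵥ (x ∘ Sum.inr), ⟨_, rfl⟩⟩⟩, ?_⟩
      ext (i | i) <;> simp [φ, fromBlocks_mulVec]
  rw [Matrix.rank, ← hrange, LinearMap.finrank_range_of_inj hinj, Module.finrank_prod]
  rfl

theorem Matrix.fromBlocks_zero_zero_pow {m n : Type*} [Fintype m] [Fintype n] [DecidableEq m]
    [DecidableEq n] (A : Matrix m m k) (D : Matrix n n k) (i : ℕ) :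
    (fromBlocks A 0 0 D) ^ i = fromBlocks (A ^ i) 0 0 (D ^ i) := by
  induction i with
  | zero => simp
  | succ i ih => simp [pow_succ, ih, fromBlocks_multiply]

variable (k) in
/-- The nilpotent Jordan block of size `d`. -/
def shiftMatrix (d : ℕ) : Matrix (Fin d) (Fin d) k :=
  Matrix.of fun a b => if (b : ℕ) = a + 1 then 1 else 0

theorem shiftMatrix_pow_apply (d i : ℕ) (a b : Fin d) :
    (shiftMatrix k d ^ i) a b = if (b : ℕ) = a + i then 1 else 0 := by
  induction i generalizing b with
  | zero => simp [Matrix.one_apply, Fin.ext_iff, eq_comm]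
  | succ i ih =>
    rw [pow_succ, Matrix.mul_apply]
    have hS : ∀ c, shiftMatrix k d c b = if (b : ℕ) = c + 1 then 1 else 0 := fun _ => rfl
    simp only [ih, hS, ite_mul, one_mul, zero_mul]
    by_cases h : (b : ℕ) = a + (i + 1)
    · rw [if_pos h, Finset.sum_eq_single ⟨a + i, by omega⟩]
      · simp; omega
      · intro c _ hc
        rw [if_neg]
        exact fun h' => hc (Fin.ext h')
      · simp
    · rw [if_neg h]
      refine Finset.sum_eq_zero fun c _ => ?_
      split_ifs <;> first | rfl | omega

theorem rank_shiftMatrix_pow (d i : ℕ) : (shiftMatrix k d ^ i).rank = d - i := by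
  apply le_antisymm
  · have h := Matrix.rank_le_card_of_support_subset (shiftMatrix k d ^ i)
      (Finset.univ.filter fun a : Fin d => (a : ℕ) < d - i) (by
        intro a ha
        by_contra hna
        refine ha (funext fun b => ?_)
        simp only [Finset.coe_filter, Finset.mem_univ, true_and, Set.mem_ofPred_eq] at hna
        simp only [Matrix.row, shiftMatrix_pow_apply]
        rw [if_neg (by omega)]
        rfl)
    refine h.trans ?_
    rw [Fin.card_filter_val_lt]
    omega
  · by_cases hi : i ≤ d
    swap
    · omega
    have h := Matrix.rank_submatrix_le (shiftMatrix k d ^ i)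
      (fun a : Fin (d - i) => (⟨a, by omega⟩ : Fin d))
      (fun a : Fin (d - i) => (⟨a + i, by omega⟩ : Fin d))
    have h1 : (shiftMatrix k d ^ i).submatrix (fun a : Fin (d - i) => (⟨a, by omega⟩ : Fin d))
      (fun a : Fin (d - i) => (⟨a + i, by omega⟩ : Fin d)) = 1 := by
      ext a b
      simp [shiftMatrix_pow_apply, Matrix.one_apply, Fin.ext_iff, eq_comm]
    rwa [h1, Matrix.rank_one, Fintype.card_fin] at h

theorem Matrix.rank_neg_pow {n : Type*} [Fintype n] [DecidableEq n] (A : Matrix n n k) (i : ℕ) :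
    ((-A) ^ i).rank = (A ^ i).rank := by
  rcases Nat.even_or_odd i with h | h
  · rw [h.neg_pow]
  · rw [h.neg_pow, ← neg_one_smul k (A ^ i), Matrix.rank_smul_of_mem_nonZeroDivisors]
    simp

variable (k) in
/-- There are a nondegenerate skew form and a symmetric form, whose quotient is nilpotent with
Jordan blocks of the sizes given by `s`. -/
def RealizesJordanType (s : Multiset ℕ) : Prop :=
  ∃ (ι : Type) (_ : Fintype ι) (_ : DecidableEq ι) (Ω G : Matrix ι ι k),
    Ωᵀ = -Ω ∧ IsUnit Ω.det ∧ Gᵀ = G ∧ ∀ i : ℕ, ((Ω * G) ^ i).rank = (s.map (· - i)).sum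

theorem RealizesJordanType.add {s t : Multiset ℕ} (hs : RealizesJordanType k s)
    (ht : RealizesJordanType k t) : RealizesJordanType k (s + t) := by
  obtain ⟨ι, _, _, Ω, G, h1, h2, h3, h4⟩ := hs
  obtain ⟨ι', _, _, Ω', G', h1', h2', h3', h4'⟩ := ht
  refine ⟨ι ⊕ ι', inferInstance, inferInstance, fromBlocks Ω 0 0 Ω', fromBlocks G 0 0 G',
    ?_, ?_, ?_, ?_⟩
  · simp [fromBlocks_transpose, h1, h1', fromBlocks_neg]
  · simpa [det_fromBlocks_zero₂₁] using ⟨isUnit_iff_ne_zero.1 h2, isUnit_iff_ne_zero.1 h2'⟩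
  · simp [fromBlocks_transpose, h3, h3']
  · intro i
    rw [fromBlocks_multiply]
    simp only [Matrix.mul_zero, Matrix.zero_mul, add_zero, zero_add]
    rw [fromBlocks_zero_zero_pow, rank_fromBlocks_zero_zero, h4, h4', Multiset.map_add,
      Multiset.sum_add]

theorem RealizesJordanType.zero : RealizesJordanType k 0 :=
  ⟨Fin 0, inferInstance, inferInstance, 0, 0, by simp, by simp, by simp, fun i => by
    rw [Multiset.map_zero, Multiset.sum_zero, ← Nat.le_zero]
    exact Matrix.rank_le_card_width _⟩

theorem RealizesJordanType.pair (d : ℕ) : RealizesJordanType k {d, d} := by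
  refine ⟨Fin d ⊕ Fin d, inferInstance, inferInstance, J (Fin d) k,
    fromBlocks 0 (shiftMatrix k d)ᵀ (shiftMatrix k d) 0, J_transpose _ _, isUnit_det_J _ _, ?_, ?_⟩
  · simp [fromBlocks_transpose]
  · intro i
    rw [J, fromBlocks_multiply]
    simp only [Matrix.mul_zero, Matrix.zero_mul, add_zero, zero_add, Matrix.neg_mul, Matrix.one_mul]
    rw [fromBlocks_zero_zero_pow, rank_fromBlocks_zero_zero, rank_neg_pow, ← transpose_pow,
      rank_transpose, rank_shiftMatrix_pow]
    simp

theorem RealizesJordanType.even {d : ℕ} (hd : Even d) : RealizesJordanType k {d} := by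
  let Ω : Matrix (Fin d) (Fin d) k :=
    Matrix.of fun a b => if (a : ℕ) + b + 1 = d then (-1) ^ (a : ℕ) else 0
  let G : Matrix (Fin d) (Fin d) k :=
    Matrix.of fun a b => if (a : ℕ) + b = d then (-1) ^ (a : ℕ) else 0
  have hmul : ∀ (X : Matrix (Fin d) (Fin d) k) (a c : Fin d),
      (Ω * X) a c = (-1) ^ (a : ℕ) * X ⟨d - 1 - a, by omega⟩ c := by
    intro X a c
    rw [Matrix.mul_apply, Finset.sum_eq_single ⟨d - 1 - a, by omega⟩]
    · simp only [Ω, Matrix.of_apply]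
      rw [if_pos (by omega)]
    · intro b _ hb
      simp only [Ω, Matrix.of_apply]
      rw [if_neg, zero_mul]
      intro h
      exact hb (Fin.ext (by simp; omega))
    · simp
  have hpar : ∀ a b : ℕ, a + b + 1 = d → (-1 : k) ^ b = -(-1) ^ a := by
    intro a b hab
    rcases Nat.even_or_odd a with ha | ha
    · have hb : Odd b := by grind
      rw [ha.neg_one_pow, hb.neg_one_pow]
    · have hb : Even b := by grind
      rw [ha.neg_one_pow, hb.neg_one_pow, neg_neg]
  have hsq : ∀ a : ℕ, (-1 : k) ^ a * (-1) ^ a = 1 := fun a => by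
    rw [← mul_pow]; simp
  have hΩsq : Ω * Ω = -1 := by
    ext a c
    rw [hmul, Matrix.neg_apply, Matrix.one_apply]
    simp only [Ω, Matrix.of_apply]
    by_cases h : a = c
    · subst h
      rw [if_pos rfl, if_pos (by omega), hpar a (d - 1 - a) (by omega), mul_neg, hsq]
    · rw [if_neg h, if_neg, mul_zero, neg_zero]
      intro h'
      exact h (Fin.ext (by omega))
  have hΩG : Ω * G = -shiftMatrix k d := by
    ext a c
    rw [hmul]
    simp only [G, shiftMatrix, Matrix.of_apply, Matrix.neg_apply]
    by_cases h : (c : ℕ) = a + 1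
    · rw [if_pos h, if_pos (by omega), hpar a (d - 1 - a) (by omega), mul_neg, hsq]
    · rw [if_neg h, if_neg (by omega), mul_zero, neg_zero]
  refine ⟨Fin d, inferInstance, inferInstance, Ω, G, ?_, ?_, ?_, ?_⟩
  · ext a b
    simp only [Ω, Matrix.transpose_apply, Matrix.of_apply, Matrix.neg_apply]
    by_cases h : (a : ℕ) + b + 1 = d
    · rw [if_pos h, if_pos (by omega), hpar a b h]
    · rw [if_neg h, if_neg (by omega), neg_zero]
  · have h := congrArg Matrix.det hΩsq
    rw [Matrix.det_mul, Matrix.det_neg, Matrix.det_one, Fintype.card_fin, hd.neg_one_pow,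
      mul_one] at h
    exact IsUnit.of_mul_eq_one _ h
  · ext a b
    simp only [G, Matrix.transpose_apply, Matrix.of_apply]
    by_cases h : (a : ℕ) + b = d
    · rw [if_pos h, if_pos (by omega)]
      rcases Nat.even_or_odd (a : ℕ) with ha | ha
      · have hb : Even (b : ℕ) := by grind
        rw [ha.neg_one_pow, hb.neg_one_pow]
      · have hb : Odd (b : ℕ) := by grind
        rw [ha.neg_one_pow, hb.neg_one_pow]
    · rw [if_neg h, if_neg (by omega)]
  · intro i
    rw [hΩG, rank_neg_pow, rank_shiftMatrix_pow]
    simp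

theorem realizesJordanType (s : Multiset ℕ) (hs : ∀ d, Odd d → Even (s.count d)) :
    RealizesJordanType k s := by
  induction hn : s.card using Nat.strong_induction_on generalizing s with
  | _ n ih =>
    rcases s.empty_or_exists_mem with rfl | ⟨d, hd⟩
    · exact RealizesJordanType.zero
    obtain ⟨t, rfl⟩ := Multiset.exists_cons_of_mem hd
    rcases Nat.even_or_odd d with he | ho
    · rw [← Multiset.singleton_add]
      refine (RealizesJordanType.even he).add (ih _ ?_ t ?_ rfl)
      · rw [← hn]; simp
      · intro e he'
        have := hs e he'
        rwa [Multiset.count_cons_of_ne (by rintro rfl; grind)] at this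
    · have hdt : d ∈ t := by
        have := hs d ho
        rw [Multiset.count_cons_self] at this
        rw [← Multiset.count_pos]
        grind
      obtain ⟨t, rfl⟩ := Multiset.exists_cons_of_mem hdt
      have hsplit : d ::ₘ d ::ₘ t = {d, d} + t := by simp
      rw [hsplit]
      refine (RealizesJordanType.pair d).add (ih _ ?_ t ?_ rfl)
      · rw [← hn]; simp
      · intro e he'
        have := hs e he'
        by_cases hed : e = d
        · subst hed
          simp only [Multiset.count_cons_self] at this
          grind
        · rwa [Multiset.count_cons_of_ne hed, Multiset.count_cons_of_ne hed] at this

end SymplecticNilpotent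

section Genericity

variable {k : Type*} [Field k]

theorem Matrix.add_transpose_eq_zero_of_forall [CharZero k] {n : Type*} [Fintype n] [DecidableEq n]
    (Y : Matrix n n k) (h : ∀ w : n → k, w ⬝ᵥ Y *ᵥ w = 0) : Y + Yᵀ = 0 := by
  have hd : ∀ i, Y i i = 0 := fun i => by simpa using h (Pi.single i 1)
  ext i j
  have := h (Pi.single i 1 + Pi.single j 1)
  simpa [Matrix.mulVec_add, hd, add_comm] using this

theorem Matrix.exists_quadratic_ne_zero [CharZero k] {n : Type*} [Fintype n] [DecidableEq n]
    (H : Matrix n n k) (hH : Hᵀ = H) (h0 : H ≠ 0) :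
    ∃ w : n → k, (∀ i, w i ≠ 0) ∧ w ⬝ᵥ H *ᵥ w ≠ 0 := by
  let q : MvPolynomial n k :=
    ∑ i, MvPolynomial.X i * ∑ j, MvPolynomial.C (H i j) * MvPolynomial.X j
  have hq : ∀ w, MvPolynomial.eval w q = w ⬝ᵥ H *ᵥ w := by
    intro w
    simp [q, dotProduct, Matrix.mulVec]
  have hq0 : q ≠ 0 := by
    intro hzero
    have h1 := Matrix.add_transpose_eq_zero_of_forall H fun w => by rw [← hq, hzero, map_zero]
    rw [hH, ← two_smul k H] at h1
    exact h0 ((smul_eq_zero.1 h1).resolve_left two_ne_zero)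
  have hprod : (∏ i, MvPolynomial.X i) * q ≠ 0 :=
    mul_ne_zero (Finset.prod_ne_zero_iff.2 fun i _ => MvPolynomial.X_ne_zero i) hq0
  obtain ⟨w, hw⟩ : ∃ w, MvPolynomial.eval w ((∏ i, MvPolynomial.X i) * q) ≠ 0 := by
    by_contra! H
    exact hprod (MvPolynomial.funext fun w => by rw [H, map_zero])
  rw [map_mul, map_prod, hq] at hw
  refine ⟨w, fun i => ?_, right_ne_zero_of_mul hw⟩
  simpa using Finset.prod_ne_zero_iff.1 (left_ne_zero_of_mul hw) i (Finset.mem_univ i)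

theorem Polynomial.exists_eval_ne_zero [Infinite k] (p : Polynomial k) (hp : p ≠ 0) :
    ∃ s, p.eval s ≠ 0 := by
  by_contra! H
  exact hp (Polynomial.funext fun s => by rw [H, Polynomial.eval_zero])

/-- A transvection preserves the skew form `Ω`. -/
theorem Matrix.transvection_mul_skew_mul_transpose [CharZero k] {n : Type*} [Fintype n]
    [DecidableEq n] (Ω : Matrix n n k) (hΩ : Ωᵀ = -Ω) (w : n → k) (s : k) :
    (1 + s • (Ω * vecMulVec w w)) * Ω * (1 + s • (Ω * vecMulVec w w))ᵀ = Ω := by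
  have hw : w ⬝ᵥ Ω *ᵥ w = 0 := by
    have h1 : w ⬝ᵥ Ω *ᵥ w = w ⬝ᵥ Ωᵀ *ᵥ w := by
      rw [Matrix.mulVec_transpose, Matrix.dotProduct_mulVec, dotProduct_comm]
    rw [hΩ, Matrix.neg_mulVec, dotProduct_neg] at h1
    exact self_eq_neg.1 h1
  have hW : vecMulVec w w * Ω * vecMulVec w w = 0 := by
    rw [Matrix.mul_assoc, Matrix.mul_vecMulVec, Matrix.vecMulVec_mul_vecMulVec, hw]
    simp
  have ht : (vecMulVec w w)ᵀ = vecMulVec w w := by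
    ext i j
    simp [vecMulVec_apply, mul_comm]
  rw [Matrix.transpose_add, Matrix.transpose_one, Matrix.transpose_smul, Matrix.transpose_mul, hΩ,
    ht]
  have hW' : vecMulVec w w * (Ω * (vecMulVec w w * Ω)) = 0 := by
    rw [← Matrix.mul_assoc, ← Matrix.mul_assoc, hW, Matrix.zero_mul]
  simp [Matrix.add_mul, Matrix.mul_add, Matrix.mul_assoc, hW']

theorem Matrix.exists_symplectic_diag_ne_zero [CharZero k] {n : Type*} [Fintype n] [DecidableEq n]
    (Ω G : Matrix n n k) (hΩ : Ωᵀ = -Ω) (hu : IsUnit Ω.det) (hG : Gᵀ = G) (h0 : G ≠ 0) :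
    ∃ g : Matrix n n k, g * Ω * gᵀ = Ω ∧ ∀ i, (gᵀ * G * g) i i ≠ 0 := by
  have hH : (Ωᵀ * G * Ω) ≠ 0 := by
    intro h
    apply h0
    have hut : IsUnit Ωᵀ.det := by rwa [Matrix.det_transpose]
    calc G = Ωᵀ⁻¹ * (Ωᵀ * G * Ω) * Ω⁻¹ := by
          rw [← Matrix.mul_assoc, ← Matrix.mul_assoc, Matrix.nonsing_inv_mul _ hut, Matrix.one_mul,
            Matrix.mul_assoc, Matrix.mul_nonsing_inv _ hu, Matrix.mul_one]
      _ = 0 := by rw [h]; simp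
  obtain ⟨w, hw, hq⟩ := Matrix.exists_quadratic_ne_zero (Ωᵀ * G * Ω)
    (by simp [Matrix.transpose_mul, hG, Matrix.mul_assoc]) hH
  let V : Matrix n n k := Ω * vecMulVec w w
  let p : n → Polynomial k := fun i => Polynomial.C (G i i) +
    Polynomial.C ((G * V) i i + (Vᵀ * G) i i) * Polynomial.X +
    Polynomial.C ((Vᵀ * G * V) i i) * Polynomial.X ^ 2
  have hV : Vᵀ * G * V = (w ⬝ᵥ (Ωᵀ * G * Ω) *ᵥ w) • vecMulVec w w := by
    have ht : (vecMulVec w w)ᵀ = vecMulVec w w := by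
      ext i j
      simp [vecMulVec_apply, mul_comm]
    have : Vᵀ * G * V = vecMulVec w w * ((Ωᵀ * G * Ω) * vecMulVec w w) := by
      simp only [V, Matrix.transpose_mul, ht, Matrix.mul_assoc]
    rw [this, Matrix.mul_vecMulVec, Matrix.vecMulVec_mul_vecMulVec]
    ext i j
    simp [vecMulVec_apply]
    ring
  have hp : ∀ i, p i ≠ 0 := by
    intro i hi
    have h2 : (Vᵀ * G * V) i i ≠ 0 := by
      rw [hV]
      simpa [vecMulVec_apply, hw] using hq
    have h3 := congrArg (fun q => Polynomial.coeff q 2) hi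
    simp only [p, Polynomial.coeff_add, Polynomial.coeff_C_mul, Polynomial.coeff_X_pow,
      Polynomial.coeff_C, Polynomial.coeff_X] at h3
    exact h2 (by simpa using h3)
  obtain ⟨s, hs⟩ := Polynomial.exists_eval_ne_zero (∏ i, p i)
    (Finset.prod_ne_zero_iff.2 fun i _ => hp i)
  refine ⟨1 + s • V, Matrix.transvection_mul_skew_mul_transpose Ω hΩ w s, fun i => ?_⟩
  rw [Polynomial.eval_prod] at hs
  have h1 := Finset.prod_ne_zero_iff.1 hs i (Finset.mem_univ i)
  have h2 : ((1 + s • V)ᵀ * G * (1 + s • V) : Matrix n n k) i i = (p i).eval s := by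
    simp [p, Matrix.add_mul, Matrix.mul_add]
    ring
  rwa [h2]

theorem Matrix.rank_pow_conj {m n : Type*} [Fintype m] [DecidableEq m] [Fintype n]
    [DecidableEq n] (K : Matrix m n k) (K' : Matrix n m k) (h : K * K' = 1) (h' : K' * K = 1)
    (X : Matrix m m k) (i : ℕ) : ((K' * X * K) ^ i).rank = (X ^ i).rank := by
  have hpow : (K' * X * K) ^ i = K' * X ^ i * K := by
    induction i with
    | zero => simp [h']
    | succ i ih =>
      rw [pow_succ, ih, pow_succ]
      calc K' * X ^ i * K * (K' * X * K) = K' * X ^ i * (K * K') * X * K := by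
            simp only [Matrix.mul_assoc]
        _ = _ := by rw [h]; simp only [Matrix.mul_assoc, Matrix.one_mul]
  apply le_antisymm
  · rw [hpow]
    exact (Matrix.rank_mul_le_left _ _).trans (Matrix.rank_mul_le_right _ _)
  · have : X ^ i = K * (K' * X * K) ^ i * K' := by
      rw [hpow]
      calc X ^ i = (K * K') * X ^ i * (K * K') := by rw [h]; simp
        _ = _ := by simp only [Matrix.mul_assoc]
    conv_lhs => rw [this]
    exact (Matrix.rank_mul_le_left _ _).trans (Matrix.rank_mul_le_right _ _)

theorem Matrix.mul_congr_eq_conj {m n : Type*} [Fintype m] [Fintype n] [DecidableEq n]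
    (Ω G : Matrix m m k) (Ω' : Matrix n n k) (K : Matrix m n k) (K' : Matrix n m k)
    (h' : K' * K = 1) (hΩ : Ω = K * Ω' * Kᵀ) : Ω' * (Kᵀ * G * K) = K' * (Ω * G) * K := by
  calc Ω' * (Kᵀ * G * K) = (K' * K) * Ω' * Kᵀ * G * K := by
        rw [h']; simp only [Matrix.mul_assoc, Matrix.one_mul]
    _ = _ := by rw [hΩ]; simp only [Matrix.mul_assoc]

/-- Two symmetric forms of prescribed Jordan type relative to the standard skew form, in general
position with respect to each coordinate plane. -/
theorem exists_symmetric_pair [CharZero k] (m : ℕ) (s : Multiset ℕ)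
    (hs : ∀ d, Odd d → Even (s.count d)) (hsum : s.sum = 2 * m) (h1 : (s.map (· - 1)).sum ≠ 0) :
    ∃ G₁ G₂ : Matrix (Fin m ⊕ Fin m) (Fin m ⊕ Fin m) k, G₁ᵀ = G₁ ∧ G₂ᵀ = G₂ ∧
      (∀ i : ℕ, ((J (Fin m) k * G₁) ^ i).rank = (s.map (· - i)).sum) ∧
      (∀ i : ℕ, ((J (Fin m) k * G₂) ^ i).rank = (s.map (· - i)).sum) ∧
      ∀ a, G₁ (.inl a) (.inl a) ≠ 0 ∧ G₂ (.inl a) (.inl a) = G₁ (.inl a) (.inl a) ∧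
        G₂ (.inl a) (.inr a) = G₁ (.inl a) (.inr a) + G₁ (.inl a) (.inl a) := by
  obtain ⟨ι, _, _, Ω, G, hΩ, hu, hG, hrank⟩ := realizesJordanType (k := k) s hs
  have hcard : Fintype.card ι = 2 * m := by
    have := hrank 0
    rw [pow_zero, Matrix.rank_one] at this
    simpa [hsum] using this
  have hG0 : G ≠ 0 := by
    rintro rfl
    apply h1
    rw [← hrank 1]
    simp
  obtain ⟨K, K', hKK', hK'K, hK⟩ := Matrix.exists_skew_equiv_J m hcard Ω hΩ hu
  have hG' : (Kᵀ * G * K)ᵀ = Kᵀ * G * K := by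
    simp [Matrix.transpose_mul, hG, Matrix.mul_assoc]
  have hG'0 : Kᵀ * G * K ≠ 0 := by
    intro h
    apply hG0
    have h3 : K'ᵀ * Kᵀ = 1 := by rw [← Matrix.transpose_mul, hKK', Matrix.transpose_one]
    calc G = (K'ᵀ * Kᵀ) * G * (K * K') := by rw [h3, hKK']; simp
      _ = K'ᵀ * (Kᵀ * G * K) * K' := by simp only [Matrix.mul_assoc]
      _ = 0 := by rw [h]; simp
  have hrank' : ∀ i : ℕ, ((J (Fin m) k * (Kᵀ * G * K)) ^ i).rank = (s.map (· - i)).sum := by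
    intro i
    rw [Matrix.mul_congr_eq_conj Ω G _ K K' hK'K hK, Matrix.rank_pow_conj K K' hKK' hK'K, hrank]
  generalize Kᵀ * G * K = G at hG' hG'0 hrank'
  have htrans : ∀ (g G : Matrix (Fin m ⊕ Fin m) (Fin m ⊕ Fin m) k),
      g * J (Fin m) k * gᵀ = J (Fin m) k → Gᵀ = G →
      (∀ i : ℕ, ((J (Fin m) k * G) ^ i).rank = (s.map (· - i)).sum) →
      (gᵀ * G * g)ᵀ = gᵀ * G * g ∧
        ∀ i : ℕ, ((J (Fin m) k * (gᵀ * G * g)) ^ i).rank = (s.map (· - i)).sum := by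
    intro g G hg hG hr
    refine ⟨by simp [Matrix.transpose_mul, hG, Matrix.mul_assoc], fun i => ?_⟩
    have hgu : IsUnit g.det := SymplecticGroup.symplectic_det (SymplecticGroup.mem_iff.2 hg)
    rw [Matrix.mul_congr_eq_conj _ G _ g g⁻¹ (Matrix.nonsing_inv_mul _ hgu) hg.symm,
      Matrix.rank_pow_conj g g⁻¹ (Matrix.mul_nonsing_inv _ hgu) (Matrix.nonsing_inv_mul _ hgu), hr]
  obtain ⟨g, hg, hdiag⟩ := Matrix.exists_symplectic_diag_ne_zero (J (Fin m) k) G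
    (J_transpose _ _) (isUnit_det_J _ _) hG' hG'0
  obtain ⟨hs1, hr1⟩ := htrans g G hg hG' hrank'
  generalize gᵀ * G * g = G₁ at hdiag hs1 hr1
  obtain ⟨hs2, hr2⟩ := htrans (fromBlocks 1 1 0 1) G₁
    (by simp [J, fromBlocks_multiply, fromBlocks_transpose]) hs1 hr1
  refine ⟨G₁, _, hs1, hs2, hr1, hr2, fun a => ⟨hdiag _, ?_, ?_⟩⟩
  all_goals
    rw [← fromBlocks_toBlocks G₁, fromBlocks_transpose, fromBlocks_multiply, fromBlocks_multiply]
    simp [toBlocks₁₁, toBlocks₁₂, add_comm]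

end Genericity

section GramData

variable {k : Type*} [Field k]

theorem Matrix.eval_det_map {n : Type*} [Fintype n] [DecidableEq n]
    (M : Matrix n n (Polynomial k)) (s : k) :
    M.det.eval s = (M.map (Polynomial.eval s)).det :=
  (Polynomial.evalRingHom s).map_det M

theorem Matrix.exists_polynomial_eval_eq_det {n : Type*} [Fintype n] [DecidableEq n]
    (M₀ M₁ M₂ : Matrix n n k) :
    ∃ F : Polynomial k, ∀ s, F.eval s = (M₀ + s • M₁ + s ^ 2 • M₂).det := by
  refine ⟨(Matrix.of fun i j => Polynomial.C (M₀ i j) + Polynomial.X * Polynomial.C (M₁ i j) +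
    Polynomial.X ^ 2 * Polynomial.C (M₂ i j)).det, fun s => ?_⟩
  rw [Matrix.eval_det_map]
  congr 1
  ext i j
  simp
  ring

theorem Matrix.isUnit_det_fromBlocks_antidiagonal {n : Type*} [Fintype n] [DecidableEq n]
    (B B' : Matrix n n k) (hB : IsUnit B.det) (hB' : IsUnit B'.det) :
    IsUnit (fromBlocks 0 B B' 0).det :=
  Matrix.isUnit_det_of_right_inverse (B := fromBlocks 0 B'⁻¹ B⁻¹ 0) (by
    simp [fromBlocks_multiply, Matrix.mul_nonsing_inv _ hB, Matrix.mul_nonsing_inv _ hB'])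

/-- Diagonal matrix with equal entries on the two members of each coordinate plane. -/
def planeDiagonal (k : Type*) [Field k] (m : ℕ) : Matrix (Fin m ⊕ Fin m) (Fin m ⊕ Fin m) k :=
  fromBlocks (diagonal fun a => (a : k) + 1) 0 0 (diagonal fun a => (a : k) + 1)

theorem isUnit_det_planeDiagonal [CharZero k] (m : ℕ) : IsUnit (planeDiagonal k m).det := by
  rw [planeDiagonal, Matrix.det_fromBlocks_zero₂₁, Matrix.det_diagonal, isUnit_iff_ne_zero,
    mul_self_ne_zero, Finset.prod_ne_zero_iff]
  exact fun a _ => Nat.cast_add_one_ne_zero _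

theorem J_mul_planeDiagonal (m : ℕ) :
    J (Fin m) k * planeDiagonal k m = planeDiagonal k m * J (Fin m) k := by
  simp only [planeDiagonal, J, fromBlocks_multiply]
  simp

/-- A nondegenerate Gram matrix whose diagonal blocks have prescribed Jordan type relative to the
standard skew form and are in general position. -/
theorem exists_gram_matrix [CharZero k] (m : ℕ) (s : Multiset ℕ)
    (hs : ∀ d, Odd d → Even (s.count d)) (hsum : s.sum = 2 * m) (h1 : (s.map (· - 1)).sum ≠ 0) :
    ∃ G₁ G₂ : Matrix (Fin m ⊕ Fin m) (Fin m ⊕ Fin m) k, G₁ᵀ = G₁ ∧ G₂ᵀ = G₂ ∧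
      (∀ i : ℕ, ((J (Fin m) k * G₁) ^ i).rank = (s.map (· - i)).sum) ∧
      (∀ i : ℕ, ((J (Fin m) k * G₂) ^ i).rank = (s.map (· - i)).sum) ∧
      (∀ a, G₁ (.inl a) (.inl a) ≠ 0 ∧ G₂ (.inl a) (.inl a) = G₁ (.inl a) (.inl a) ∧
        G₂ (.inl a) (.inr a) = G₁ (.inl a) (.inr a) + G₁ (.inl a) (.inl a)) ∧
      IsUnit (fromBlocks G₁ (J (Fin m) k * planeDiagonal k m)
        (J (Fin m) k * planeDiagonal k m)ᵀ G₂).det := by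
  obtain ⟨G₁, G₂, hs1, hs2, hr1, hr2, hd⟩ := exists_symmetric_pair (k := k) m s hs hsum h1
  have hB : IsUnit (J (Fin m) k * planeDiagonal k m).det := by
    rw [Matrix.det_mul]
    exact (isUnit_det_J _ _).mul (isUnit_det_planeDiagonal m)
  generalize J (Fin m) k * planeDiagonal k m = B at hB ⊢
  obtain ⟨F, hF⟩ := Matrix.exists_polynomial_eval_eq_det (fromBlocks 0 B Bᵀ 0)
    (fromBlocks G₁ 0 0 G₂) 0
  have hF0 : F ≠ 0 := by
    rintro rfl
    have h2 := hF 0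
    have h3 := Matrix.isUnit_det_fromBlocks_antidiagonal B Bᵀ hB (by rwa [Matrix.det_transpose])
    simp at h2
    simp [← h2] at h3
  obtain ⟨σ, hσ⟩ := Polynomial.exists_eval_ne_zero (Polynomial.X * F)
    (mul_ne_zero Polynomial.X_ne_zero hF0)
  rw [Polynomial.eval_mul, Polynomial.eval_X] at hσ
  have hσ0 := left_ne_zero_of_mul hσ
  have hrank : ∀ (G : Matrix (Fin m ⊕ Fin m) (Fin m ⊕ Fin m) k) (i : ℕ),
      ((J (Fin m) k * σ • G) ^ i).rank = ((J (Fin m) k * G) ^ i).rank := by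
    intro G i
    rw [Matrix.mul_smul, smul_pow,
      Matrix.rank_smul_of_mem_nonZeroDivisors _ (mem_nonZeroDivisors_of_ne_zero (pow_ne_zero i hσ0))]
  refine ⟨σ • G₁, σ • G₂, by simp [hs1], by simp [hs2], fun i => by rw [hrank, hr1],
    fun i => by rw [hrank, hr2], fun a => ⟨?_, ?_, ?_⟩, ?_⟩
  · simpa [hσ0] using (hd a).1
  · simp [(hd a).2.1]
  · simp [(hd a).2.2, mul_add]
  · have h2 := right_ne_zero_of_mul hσ
    rw [hF] at h2
    rw [isUnit_iff_ne_zero]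
    simpa [fromBlocks_smul, fromBlocks_add] using h2

/-- Over an algebraically closed field every symmetric matrix is a Gram matrix. -/
theorem Matrix.exists_transpose_mul_self_eq [CharZero k] [IsAlgClosed k] {n : Type*} [Fintype n]
    [DecidableEq n] {N : ℕ} (hN : Fintype.card n ≤ N) (G : Matrix n n k) (hG : Gᵀ = G) :
    ∃ A : Matrix (Fin N) n k, Aᵀ * A = G := by
  have : Invertible (2 : k) := invertibleOfNonzero two_ne_zero
  have hsymm : LinearMap.IsSymm (Matrix.toBilin' G) := by
    refine ⟨fun x y => ?_⟩
    rw [RingHom.id_apply]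
    rw [Matrix.toBilin'_apply', Matrix.toBilin'_apply', Matrix.dotProduct_mulVec,
      dotProduct_comm, ← Matrix.mulVec_transpose, hG]
  obtain ⟨v, hv⟩ := LinearMap.BilinForm.exists_orthogonal_basis hsymm
  have hfr : Module.finrank k (n → k) ≤ N := by simpa using hN
  have h1 := LinearMap.BilinForm.toMatrix_mul_basis_toMatrix v (Pi.basisFun k n) (Matrix.toBilin' G)
  have h2 : LinearMap.BilinForm.toMatrix (Pi.basisFun k n) (Matrix.toBilin' G) = G := by
    rw [LinearMap.BilinForm.toMatrix_basisFun]
    exact LinearMap.BilinForm.toMatrix'_toBilin' G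
  choose r hr using fun i => IsAlgClosed.exists_pow_nat_eq
    (Matrix.toBilin' G (v i) (v i)) (n := 2) two_pos
  have h3 : LinearMap.BilinForm.toMatrix v (Matrix.toBilin' G) = diagonal r * diagonal r := by
    ext i j
    rw [LinearMap.BilinForm.toMatrix_apply, diagonal_mul_diagonal, diagonal_apply]
    split_ifs with hij
    · rw [← hij, ← hr, sq]
    · exact hv hij
  let E : Matrix (Fin N) (Fin (Module.finrank k (n → k))) k :=
    (1 : Matrix (Fin N) (Fin N) k).submatrix id (Fin.castLE hfr)
  have hE : Eᵀ * E = 1 := by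
    simp only [E, Matrix.transpose_submatrix, Matrix.transpose_one]
    rw [← Matrix.submatrix_mul _ _ _ _ _ Function.bijective_id, Matrix.mul_one]
    exact Matrix.submatrix_one _ (Fin.castLE_injective hfr)
  refine ⟨E * (diagonal r * v.toMatrix (Pi.basisFun k n)), ?_⟩
  rw [Matrix.transpose_mul, Matrix.transpose_mul, diagonal_transpose, ← h2, ← h1, h3]
  calc _ = (v.toMatrix (Pi.basisFun k n))ᵀ * diagonal r * (Eᵀ * E) *
        (diagonal r * v.toMatrix (Pi.basisFun k n)) := by simp only [Matrix.mul_assoc]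
    _ = _ := by rw [hE, Matrix.mul_one]; simp only [Matrix.mul_assoc]

theorem Matrix.rank_mul_skew_mul_transpose_pow {n ι : Type*} [Fintype n] [DecidableEq n]
    [Fintype ι] [DecidableEq ι] (A : Matrix n ι k) (A' : Matrix ι n k) (hA : A' * A = 1)
    (Ω : Matrix ι ι k) (hΩ : IsUnit Ω.det) (i : ℕ) :
    ((A * Ω * Aᵀ) ^ (i + 1)).rank = ((Ω * (Aᵀ * A)) ^ i).rank := by
  have hpow : (A * Ω * Aᵀ) ^ (i + 1) = A * (Ω * (Aᵀ * A)) ^ i * (Ω * Aᵀ) := by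
    induction i with
    | zero => simp [Matrix.mul_assoc]
    | succ i ih =>
      rw [pow_succ, ih, pow_succ]
      simp only [Matrix.mul_assoc]
  apply le_antisymm
  · rw [hpow]
    exact (Matrix.rank_mul_le_left _ _).trans (Matrix.rank_mul_le_right _ _)
  · have hA' : Aᵀ * A'ᵀ = 1 := by rw [← Matrix.transpose_mul, hA, Matrix.transpose_one]
    have : (Ω * (Aᵀ * A)) ^ i = A' * (A * Ω * Aᵀ) ^ (i + 1) * (A'ᵀ * Ω⁻¹) := by
      rw [hpow]
      calc _ = (A' * A) * (Ω * (Aᵀ * A)) ^ i * (Ω * (Aᵀ * A'ᵀ) * Ω⁻¹) := by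
            rw [hA, hA', Matrix.mul_one, Matrix.mul_nonsing_inv _ hΩ, Matrix.mul_one,
              Matrix.one_mul]
        _ = _ := by simp only [Matrix.mul_assoc]
    rw [this]
    exact (Matrix.rank_mul_le_left _ _).trans (Matrix.rank_mul_le_right _ _)

theorem exists_eq_diagonal_of_mul_eq [CharZero k] {m : ℕ} {X Y : Matrix (Fin m) (Fin m) k}
    (h : X * diagonal (fun a : Fin m => (a : k) + 1) = diagonal (fun a : Fin m => (a : k) + 1) * Y)
    (h' : diagonal (fun a : Fin m => (a : k) + 1) * X =
      Y * diagonal (fun a : Fin m => (a : k) + 1)) :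
    ∃ d : Fin m → k, X = diagonal d ∧ Y = diagonal d := by
  have e : ∀ a b : Fin m, X a b * ((b : k) + 1) = ((a : k) + 1) * Y a b := fun a b => by
    simpa using congrFun (congrFun h a) b
  have e' : ∀ a b : Fin m, ((a : k) + 1) * X a b = Y a b * ((b : k) + 1) := fun a b => by
    simpa using congrFun (congrFun h' a) b
  have hne : ∀ a : Fin m, (a : k) + 1 ≠ 0 := fun a => Nat.cast_add_one_ne_zero _
  have hXY : ∀ a, Y a a = X a a := fun a =>
    mul_right_cancel₀ (hne a) (by linear_combination -e' a a)
  have hX : ∀ a b, a ≠ b → X a b = 0 := by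
    intro a b hab
    have h1 : X a b * (((b : k) - a) * (((b + a + 1 : ℕ) : k) + 1)) = 0 := by
      push_cast
      linear_combination ((b : k) + 1) * e a b - ((a : k) + 1) * e' a b
    refine (mul_eq_zero.1 h1).resolve_right (mul_ne_zero (sub_ne_zero.2 ?_)
      (Nat.cast_add_one_ne_zero _))
    exact fun hba => hab (Fin.ext (Nat.cast_injective hba).symm)
  refine ⟨fun a => X a a, ?_, ?_⟩ <;> ext a b <;> rw [diagonal_apply] <;> split_ifs with hab
  · rw [hab]
  · exact hX a b hab
  · rw [← hab, hXY]
  · have h1 := e a b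
    rw [hX a b hab, zero_mul] at h1
    exact (mul_eq_zero.1 h1.symm).resolve_left (hne a)

/-- The linear equations expressing that a covector annihilates all tangent directions have only
the zero solution. -/
theorem eq_zero_of_symmetric_intertwiners [CharZero k] {m : ℕ}
    {G₁ G₂ C₁ C₂ : Matrix (Fin m ⊕ Fin m) (Fin m ⊕ Fin m) k}
    (hd : ∀ a, G₁ (.inl a) (.inl a) ≠ 0 ∧ G₂ (.inl a) (.inl a) = G₁ (.inl a) (.inl a) ∧
      G₂ (.inl a) (.inr a) = G₁ (.inl a) (.inr a) + G₁ (.inl a) (.inl a))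
    (hG₁ : G₁ᵀ = G₁) (hG₂ : G₂ᵀ = G₂) (hC₁ : C₁ᵀ = C₁) (hC₂ : C₂ᵀ = C₂)
    (h₁ : C₁ * G₁ * J (Fin m) k = J (Fin m) k * G₁ * C₁)
    (h₂ : C₂ * G₂ * J (Fin m) k = J (Fin m) k * G₂ * C₂)
    (h₁₂ : C₁ * (J (Fin m) k * planeDiagonal k m) * J (Fin m) k =
      J (Fin m) k * (J (Fin m) k * planeDiagonal k m) * C₂) : C₁ = 0 ∧ C₂ = 0 := by
  have hCD : C₁ * planeDiagonal k m = planeDiagonal k m * C₂ := by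
    rw [J_mul_planeDiagonal, ← Matrix.mul_assoc, Matrix.mul_assoc, J_squared, ← J_mul_planeDiagonal,
      ← Matrix.mul_assoc, J_squared] at h₁₂
    simpa using h₁₂
  have hDC : planeDiagonal k m * C₁ = C₂ * planeDiagonal k m := by
    have := congrArg Matrix.transpose hCD
    simpa [planeDiagonal, Matrix.transpose_mul, fromBlocks_transpose, hC₁, hC₂] using this
  rw [← fromBlocks_toBlocks C₁, ← fromBlocks_toBlocks C₂, planeDiagonal] at hCD hDC
  simp only [fromBlocks_multiply, Matrix.mul_zero, Matrix.zero_mul, add_zero, zero_add,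
    fromBlocks_inj] at hCD hDC
  obtain ⟨P, hP, hP'⟩ := exists_eq_diagonal_of_mul_eq hCD.1 hDC.1
  obtain ⟨Q, hQ, hQ'⟩ := exists_eq_diagonal_of_mul_eq hCD.2.1 hDC.2.1
  obtain ⟨R, hR, hR'⟩ := exists_eq_diagonal_of_mul_eq hCD.2.2.2 hDC.2.2.2
  have hsym : ∀ C : Matrix (Fin m ⊕ Fin m) (Fin m ⊕ Fin m) k, Cᵀ = C →
      C.toBlocks₂₁ = C.toBlocks₁₂ᵀ := by
    intro C hC
    ext a b
    conv_lhs => rw [← hC]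
    rfl
  have hC₁' : C₁ = fromBlocks (diagonal P) (diagonal Q) (diagonal Q) (diagonal R) := by
    rw [← fromBlocks_toBlocks C₁, hsym C₁ hC₁, hP, hQ, hR, diagonal_transpose]
  have hC₂' : C₂ = fromBlocks (diagonal P) (diagonal Q) (diagonal Q) (diagonal R) := by
    rw [← fromBlocks_toBlocks C₂, hsym C₂ hC₂, hP', hQ', hR', diagonal_transpose]
  have key : ∀ G : Matrix (Fin m ⊕ Fin m) (Fin m ⊕ Fin m) k, Gᵀ = G →
      fromBlocks (diagonal P) (diagonal Q) (diagonal Q) (diagonal R) * G * J (Fin m) k =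
        J (Fin m) k * G * fromBlocks (diagonal P) (diagonal Q) (diagonal Q) (diagonal R) →
      ∀ a, Q a * G (.inl a) (.inl a) + R a * G (.inl a) (.inr a) = 0 ∧
        P a * G (.inl a) (.inl a) = R a * G (.inr a) (.inr a) := by
    intro G hG h a
    have hG' : G (.inr a) (.inl a) = G (.inl a) (.inr a) := congrFun (congrFun hG _) _
    rw [← fromBlocks_toBlocks G, J] at h
    simp only [fromBlocks_multiply, Matrix.mul_zero, Matrix.zero_mul, add_zero, zero_add,
      Matrix.mul_one, Matrix.one_mul, Matrix.mul_neg, Matrix.neg_mul, fromBlocks_inj] at h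
    have h12 := congrFun (congrFun h.2.1 a) a
    have h22 := congrFun (congrFun h.2.2.2 a) a
    simp [toBlocks₁₁, toBlocks₁₂, toBlocks₂₁, toBlocks₂₂, hG'] at h12 h22
    constructor
    · have h2 : (2 : k) * (Q a * G (.inl a) (.inl a) + R a * G (.inl a) (.inr a)) = 0 := by
        linear_combination -h22
      exact (mul_eq_zero.1 h2).resolve_left two_ne_zero
    · linear_combination -h12
  rw [hC₁'] at h₁
  rw [hC₂'] at h₂
  have hzero : ∀ a, P a = 0 ∧ Q a = 0 ∧ R a = 0 := by
    intro a
    obtain ⟨e1, e2⟩ := key G₁ hG₁ h₁ a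
    obtain ⟨e3, -⟩ := key G₂ hG₂ h₂ a
    obtain ⟨d1, d2, d3⟩ := hd a
    rw [d2, d3] at e3
    have hR0 : R a = 0 := by
      refine (mul_eq_zero.1 (?_ : R a * G₁ (.inl a) (.inl a) = 0)).resolve_right d1
      linear_combination e3 - e1
    rw [hR0] at e1 e2
    exact ⟨by simpa [d1] using e2, by simpa [d1] using e1, hR0⟩
  have hP0 : P = 0 := funext fun a => (hzero a).1
  have hQ0 : Q = 0 := funext fun a => (hzero a).2.1
  have hR0 : R = 0 := funext fun a => (hzero a).2.2
  simp [hC₁', hC₂', hP0, hQ0, hR0]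

end GramData

section Transversality

variable {k : Type*} [Field k]

theorem LinearMap.exists_polynomial_injective {V W : Type*} [AddCommGroup V] [Module k V]
    [FiniteDimensional k V] [AddCommGroup W] [Module k W] (φ₀ φ₁ φ₂ : V →ₗ[k] W)
    (h : Function.Injective φ₀) :
    ∃ F : Polynomial k, F ≠ 0 ∧
      ∀ s, F.eval s ≠ 0 → Function.Injective (φ₀ + s • φ₁ + s ^ 2 • φ₂) := by
  obtain ⟨ψ, hψ⟩ := φ₀.exists_leftInverse_of_injective (LinearMap.ker_eq_bot.2 h)
  let b := Module.finBasis k V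
  obtain ⟨F, hF⟩ := Matrix.exists_polynomial_eval_eq_det (LinearMap.toMatrix b b (ψ ∘ₗ φ₀))
    (LinearMap.toMatrix b b (ψ ∘ₗ φ₁)) (LinearMap.toMatrix b b (ψ ∘ₗ φ₂))
  have hF' : ∀ s, F.eval s = LinearMap.det (ψ ∘ₗ (φ₀ + s • φ₁ + s ^ 2 • φ₂)) := by
    intro s
    rw [hF, ← LinearMap.det_toMatrix b]
    simp [LinearMap.comp_add, LinearMap.comp_smul]
  refine ⟨F, ?_, fun s hs => ?_⟩
  · rintro rfl
    have := hF' 0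
    simp [hψ] at this
  · rw [hF'] at hs
    have hinj := ((LinearMap.isUnit_iff_isUnit_det _).2 (isUnit_iff_ne_zero.2 hs))
    have hker := LinearMap.ker_eq_bot.1 (LinearMap.isUnit_iff_ker_eq_bot _ |>.1 hinj)
    rw [LinearMap.coe_comp] at hker
    exact hker.of_comp

variable {n ι : Type*} [Fintype n] [Fintype ι]

/-- The pairing `(A, L) ↦ (A₁L₁ᵀ - L₁A₁ᵀ, A₂L₂ᵀ - L₂A₂ᵀ, LᵀAΩ + (LᵀAΩ)ᵀ)`; it vanishes exactly when
the covector `L` annihilates the infinitesimal orthogonal and symplectic motions of `A`. -/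
def tangentPairing (Ω : Matrix (ι ⊕ ι) (ι ⊕ ι) k) :
    Matrix n (ι ⊕ ι) k →ₗ[k] Matrix n (ι ⊕ ι) k →ₗ[k]
      Matrix n n k × Matrix n n k × Matrix (ι ⊕ ι) (ι ⊕ ι) k :=
  LinearMap.mk₂ k
    (fun A L => (A.toCols₁ * L.toCols₁ᵀ - L.toCols₁ * A.toCols₁ᵀ,
      A.toCols₂ * L.toCols₂ᵀ - L.toCols₂ * A.toCols₂ᵀ, Lᵀ * A * Ω + (Lᵀ * A * Ω)ᵀ))
    (by
      intro A A' L
      have h₁ : (A + A').toCols₁ = A.toCols₁ + A'.toCols₁ := rfl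
      have h₂ : (A + A').toCols₂ = A.toCols₂ + A'.toCols₂ := rfl
      simp only [h₁, h₂, Matrix.transpose_add, Matrix.add_mul, Matrix.mul_add, Prod.mk_add_mk]
      congr 1
      · abel
      · congr 1 <;> abel)
    (by
      intro c A L
      have h₁ : (c • A).toCols₁ = c • A.toCols₁ := rfl
      have h₂ : (c • A).toCols₂ = c • A.toCols₂ := rfl
      simp only [h₁, h₂, Matrix.transpose_smul, Matrix.smul_mul, Matrix.mul_smul, Prod.smul_mk,
        smul_sub, smul_add])
    (by
      intro A L L'
      have h₁ : (L + L').toCols₁ = L.toCols₁ + L'.toCols₁ := rfl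
      have h₂ : (L + L').toCols₂ = L.toCols₂ + L'.toCols₂ := rfl
      simp only [h₁, h₂, Matrix.transpose_add, Matrix.add_mul, Matrix.mul_add, Prod.mk_add_mk]
      congr 1
      · abel
      · congr 1 <;> abel)
    (by
      intro c A L
      have h₁ : (c • L).toCols₁ = c • L.toCols₁ := rfl
      have h₂ : (c • L).toCols₂ = c • L.toCols₂ := rfl
      simp only [h₁, h₂, Matrix.transpose_smul, Matrix.smul_mul, Matrix.mul_smul, Prod.smul_mk,
        smul_sub, smul_add])

theorem tangentPairing_apply (Ω : Matrix (ι ⊕ ι) (ι ⊕ ι) k) (A L : Matrix n (ι ⊕ ι) k) :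
    tangentPairing Ω A L = (A.toCols₁ * L.toCols₁ᵀ - L.toCols₁ * A.toCols₁ᵀ,
      A.toCols₂ * L.toCols₂ᵀ - L.toCols₂ * A.toCols₂ᵀ, Lᵀ * A * Ω + (Lᵀ * A * Ω)ᵀ) :=
  rfl

theorem Matrix.exists_symmetric_of_mul_transpose_eq [DecidableEq ι] {A L : Matrix n ι k} {A' : Matrix ι n k}
    (hA : A' * A = 1) (h : A * Lᵀ = L * Aᵀ) : ∃ C : Matrix ι ι k, Cᵀ = C ∧ L = A * C := by
  have h1 : L = A * (A' * L)ᵀ := by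
    have h2 : Lᵀ = A' * L * Aᵀ := by
      rw [Matrix.mul_assoc, ← h, ← Matrix.mul_assoc, hA, Matrix.one_mul]
    have h3 := congrArg Matrix.transpose h2
    rwa [Matrix.transpose_transpose, Matrix.transpose_mul, Matrix.transpose_transpose] at h3
  refine ⟨(A' * L)ᵀ, ?_, h1⟩
  rw [Matrix.transpose_transpose]
  conv_lhs => rw [h1, ← Matrix.mul_assoc, hA, Matrix.one_mul]

theorem tangentPairing_injective [CharZero k] {m : ℕ}
    {G₁ G₂ : Matrix (Fin m ⊕ Fin m) (Fin m ⊕ Fin m) k}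
    (hd : ∀ a, G₁ (.inl a) (.inl a) ≠ 0 ∧ G₂ (.inl a) (.inl a) = G₁ (.inl a) (.inl a) ∧
      G₂ (.inl a) (.inr a) = G₁ (.inl a) (.inr a) + G₁ (.inl a) (.inl a))
    {A₁ A₂ : Matrix n (Fin m ⊕ Fin m) k} {A₁' A₂' : Matrix (Fin m ⊕ Fin m) n k}
    (hA₁ : A₁' * A₁ = 1) (hA₂ : A₂' * A₂ = 1) (h₁ : A₁ᵀ * A₁ = G₁) (h₂ : A₂ᵀ * A₂ = G₂)
    (h₁₂ : A₁ᵀ * A₂ = J (Fin m) k * planeDiagonal k m) :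
    Function.Injective
      (tangentPairing (fromBlocks (J (Fin m) k) 0 0 (J (Fin m) k)) (fromCols A₁ A₂)) := by
  rw [← LinearMap.ker_eq_bot, LinearMap.ker_eq_bot']
  intro L hL
  rw [← fromCols_toCols L] at hL ⊢
  generalize L.toCols₁ = L₁ at hL ⊢
  generalize L.toCols₂ = L₂ at hL ⊢
  rw [tangentPairing_apply] at hL
  simp only [toCols₁_fromCols, toCols₂_fromCols, Prod.mk_eq_zero, sub_eq_zero] at hL
  obtain ⟨e₁, e₂, e₃⟩ := hL
  obtain ⟨C₁, hC₁, rfl⟩ := Matrix.exists_symmetric_of_mul_transpose_eq hA₁ e₁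
  obtain ⟨C₂, hC₂, rfl⟩ := Matrix.exists_symmetric_of_mul_transpose_eq hA₂ e₂
  have h₂₁ : A₂ᵀ * A₁ = (J (Fin m) k * planeDiagonal k m)ᵀ := by
    rw [← h₁₂, Matrix.transpose_mul, Matrix.transpose_transpose]
  have hG₁ : G₁ᵀ = G₁ := by rw [← h₁, Matrix.transpose_mul, Matrix.transpose_transpose]
  have hG₂ : G₂ᵀ = G₂ := by rw [← h₂, Matrix.transpose_mul, Matrix.transpose_transpose]
  rw [transpose_fromCols, fromRows_mul_fromCols, fromBlocks_multiply] at e₃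
  simp only [Matrix.transpose_mul, Matrix.mul_assoc, hC₁, hC₂, Matrix.mul_zero, zero_add, add_zero,
    fromBlocks_transpose, fromBlocks_add, J_transpose, Matrix.transpose_transpose] at e₃
  simp only [← Matrix.mul_assoc _ _ (J (Fin m) k), ← Matrix.mul_assoc A₁ᵀ, ← Matrix.mul_assoc A₂ᵀ,
    h₁, h₂, h₁₂, h₂₁] at e₃
  rw [← fromBlocks_zero, fromBlocks_inj] at e₃
  simp only [Matrix.neg_mul, add_neg_eq_zero, ← Matrix.mul_assoc (J (Fin m) k) _ C₁,
    ← Matrix.mul_assoc (J (Fin m) k) _ C₂] at e₃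
  obtain ⟨rfl, rfl⟩ :=
    eq_zero_of_symmetric_intertwiners hd hG₁ hG₂ hC₁ hC₂ e₃.1 e₃.2.2.2 e₃.2.1
  ext i (j | j) <;> simp

theorem Matrix.transpose_mul_self_exp [DecidableEq n] [CharZero k] {x : Matrix n n k} (hx : xᵀ = -x)
    (hx3 : x * x * x = 0) (s : k) :
    (1 + s • x + s ^ 2 • ((2⁻¹ : k) • (x * x)))ᵀ * (1 + s • x + s ^ 2 • ((2⁻¹ : k) • (x * x))) = 1 := by
  have h4 : x * x * (x * x) = 0 := by rw [← Matrix.mul_assoc, hx3, Matrix.zero_mul]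
  have h3 : x * (x * x) = 0 := by rw [← Matrix.mul_assoc, hx3]
  have ht : (1 + s • x + s ^ 2 • ((2⁻¹ : k) • (x * x)))ᵀ =
      1 - s • x + s ^ 2 • ((2⁻¹ : k) • (x * x)) := by
    simp [Matrix.transpose_mul, hx, sub_eq_add_neg]
  rw [ht]
  simp only [Matrix.add_mul, Matrix.sub_mul, Matrix.mul_add, Matrix.one_mul, Matrix.mul_one,
    Matrix.smul_mul, Matrix.mul_smul, hx3, h3, h4, smul_zero, add_zero, sub_zero]
  module

theorem Matrix.skew_rank_two_cube {u v : n → k} (huu : u ⬝ᵥ u = 0) (huv : u ⬝ᵥ v = 0) :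
    (vecMulVec u v - vecMulVec v u)ᵀ = -(vecMulVec u v - vecMulVec v u) ∧
    (vecMulVec u v - vecMulVec v u) * (vecMulVec u v - vecMulVec v u) *
      (vecMulVec u v - vecMulVec v u) = 0 := by
  have hvu : v ⬝ᵥ u = 0 := by rw [dotProduct_comm, huv]
  constructor
  · ext i j
    simp [vecMulVec_apply, mul_comm]
  · simp [Matrix.sub_mul, Matrix.mul_sub, Matrix.vecMulVec_mul_vecMulVec, huu, huv, hvu]

theorem Matrix.eq_transpose_of_forall_isotropic [DecidableEq n] [CharZero k] [IsAlgClosed k]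
    (hn : 3 ≤ Fintype.card n) (X : Matrix n n k)
    (h : ∀ u v : n → k, u ⬝ᵥ u = 0 → u ⬝ᵥ v = 0 →
      ((vecMulVec u v - vecMulVec v u) * X).trace = 0) : X = Xᵀ := by
  obtain ⟨c, hc⟩ := IsAlgClosed.exists_pow_nat_eq (-1 : k) (n := 2) two_pos
  have hc0 : c ≠ 0 := by
    rintro rfl
    simp at hc
  have h' : ∀ u v : n → k, u ⬝ᵥ u = 0 → u ⬝ᵥ v = 0 → v ⬝ᵥ X *ᵥ u = u ⬝ᵥ X *ᵥ v := by
    intro u v huu huv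
    have h1 := h u v huu huv
    rw [Matrix.sub_mul, Matrix.trace_sub, Matrix.vecMulVec_mul, Matrix.vecMulVec_mul,
      Matrix.trace_vecMulVec, Matrix.trace_vecMulVec, sub_eq_zero] at h1
    rw [Matrix.dotProduct_mulVec, Matrix.dotProduct_mulVec, dotProduct_comm, h1, dotProduct_comm]
  have key : ∀ e : k, e ^ 2 = -1 → ∀ i j l : n, i ≠ j → i ≠ l → j ≠ l →
      X j i + e * X j l = X i j + e * X l j := by
    intro e he i j l hij hil hjl
    have h1 := h' (Pi.single i 1 + e • Pi.single l 1) (Pi.single j 1)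
      (by
        simp [hil, hil.symm, ← sq, he])
      (by simp [hij, hjl.symm])
    simpa [Matrix.mulVec_add, Matrix.mulVec_smul] using h1
  ext i j
  by_cases hij : i = j
  · rw [hij, Matrix.transpose_apply]
  · obtain ⟨l, hl⟩ : ∃ l, l ∉ ({i, j} : Finset n) := by
      by_contra! H
      have : Fintype.card n ≤ ({i, j} : Finset n).card :=
        Finset.card_le_card fun x _ => H x
      have := Finset.card_le_two (a := i) (b := j)
      omega
    simp only [Finset.mem_insert, Finset.mem_singleton, not_or] at hl
    have e1 := key c hc i j l hij (Ne.symm hl.1) (Ne.symm hl.2)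
    have e2 := key (-c) (by rw [neg_sq, hc]) i j l hij (Ne.symm hl.1) (Ne.symm hl.2)
    rw [Matrix.transpose_apply]
    have h2 : (2 : k) * (X i j - X j i) = 0 := by linear_combination -e1 - e2
    exact sub_eq_zero.1 ((mul_eq_zero.1 h2).resolve_left two_ne_zero)

end Transversality

section OrbitDensity

variable {k : Type*} [Field k]

theorem Matrix.isUnit_of_mul_mul_transpose_eq {ι : Type*} [Fintype ι] [DecidableEq ι]
    {Ω g : Matrix ι ι k} (hΩ : IsUnit Ω.det)
    (hg : g * Ω * gᵀ = Ω) : IsUnit g.det := by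
  rw [← hg, Matrix.det_mul, Matrix.det_mul] at hΩ
  exact isUnit_of_mul_isUnit_left (isUnit_of_mul_isUnit_left hΩ)

variable [CharZero k]

theorem MvPolynomial.trace_gradient_mul_tangent {n c : Type*} [Fintype n] [Fintype c]
    (P : MvPolynomial (n × c) k) (V₀ V₁ V₂ : Matrix n c k) (F : Polynomial k) (hF : F ≠ 0)
    (h : ∀ s, F.eval s ≠ 0 →
      MvPolynomial.eval (fun q => (V₀ + s • V₁ + s ^ 2 • V₂) q.1 q.2) P = 0) :
    ((Matrix.of fun i j => MvPolynomial.eval (fun q => V₀ q.1 q.2)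
      (MvPolynomial.pderiv (i, j) P))ᵀ * V₁).trace = 0 := by
  have h1 := MvPolynomial.sum_pderiv_mul_tangent_eq_zero P
    (fun q => Polynomial.C (V₀ q.1 q.2) + Polynomial.C (V₁ q.1 q.2) * Polynomial.X +
      Polynomial.C (V₂ q.1 q.2) * Polynomial.X ^ 2) F hF (by
        intro s hs
        convert h s hs using 3
        funext q
        simp only [Polynomial.eval_add, Polynomial.eval_mul, Polynomial.eval_C, Polynomial.eval_X,
          Polynomial.eval_pow, Matrix.add_apply, Matrix.smul_apply, smul_eq_mul]
        ring)
  simp only [Polynomial.eval_add, Polynomial.eval_mul, Polynomial.eval_C, Polynomial.eval_X,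
    Polynomial.eval_pow, mul_zero, add_zero, ne_eq, OfNat.ofNat_ne_zero, not_false_eq_true,
    zero_pow, Polynomial.derivative_add, Polynomial.derivative_C, Polynomial.derivative_C_mul,
    Polynomial.derivative_X, Polynomial.derivative_X_pow, mul_one, zero_add] at h1
  rw [Fintype.sum_prod_type_right] at h1
  simpa [Matrix.trace, Matrix.mul_apply] using h1

variable [IsAlgClosed k] {n ι : Type*} [Fintype n] [DecidableEq n] [Fintype ι] [DecidableEq ι]

/-- If the tangent directions at `A` span, then the moves of `A` by a pair of orthogonal matrices
(acting on the two column blocks) and a symplectic matrix are Zariski dense. -/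
theorem eq_zero_of_vanishes_on_moves (hn : 3 ≤ Fintype.card n)
    (Ω : Matrix (ι ⊕ ι) (ι ⊕ ι) k) (hskew : Ωᵀ = -Ω) (hΩ : IsUnit Ω.det)
    (A₁ A₂ : Matrix n ι k) (hA : Function.Injective (tangentPairing Ω (fromCols A₁ A₂)))
    (Q : MvPolynomial (n × (ι ⊕ ι)) k)
    (hQ : ∀ (h₁ h₂ : Matrix n n k) (g : Matrix (ι ⊕ ι) (ι ⊕ ι) k), h₁ᵀ * h₁ = 1 → h₂ᵀ * h₂ = 1 →
      g * Ω * gᵀ = Ω →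
      MvPolynomial.eval (fun q => (fromCols (h₁ * A₁) (h₂ * A₂) * g) q.1 q.2) Q = 0) : Q = 0 := by
  let T : Set (n × (ι ⊕ ι) → k) := {t | ∃ (h₁ h₂ : Matrix n n k) (g : Matrix (ι ⊕ ι) (ι ⊕ ι) k),
    h₁ᵀ * h₁ = 1 ∧ h₂ᵀ * h₂ = 1 ∧ g * Ω * gᵀ = Ω ∧
    Function.Injective (tangentPairing Ω (fromCols (h₁ * A₁) (h₂ * A₂))) ∧
    t = fun q => (fromCols (h₁ * A₁) (h₂ * A₂) * g) q.1 q.2}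
  refine MvPolynomial.eq_zero_of_gradient T ⟨_, 1, 1, 1, by simp, by simp, by simp, by simpa, rfl⟩
    ?_ Q ?_
  swap
  · rintro t ⟨h₁, h₂, g, e₁, e₂, e₃, -, rfl⟩
    exact hQ h₁ h₂ g e₁ e₂ e₃
  rintro P hP t ⟨h₁, h₂, g, e₁, e₂, e₃, hinj, rfl⟩
  let d : Matrix n (ι ⊕ ι) k := Matrix.of fun i j => MvPolynomial.eval
    (fun q => (fromCols (h₁ * A₁) (h₂ * A₂) * g) q.1 q.2) (MvPolynomial.pderiv (i, j) P)
  let L : Matrix n (ι ⊕ ι) k := d * gᵀ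
  have hLd : ∀ V : Matrix n (ι ⊕ ι) k, (Lᵀ * V).trace = (dᵀ * (V * g)).trace := by
    intro V
    rw [Matrix.transpose_mul, Matrix.transpose_transpose, Matrix.mul_assoc, Matrix.trace_mul_comm,
      Matrix.mul_assoc]
  have horth : ∀ x₁ x₂ : Matrix n n k, x₁ᵀ = -x₁ → x₂ᵀ = -x₂ → x₁ * x₁ * x₁ = 0 →
      x₂ * x₂ * x₂ = 0 →
      (Lᵀ * fromCols (x₁ * (h₁ * A₁)) (x₂ * (h₂ * A₂))).trace = 0 := by
    intro x₁ x₂ s₁ s₂ c₁ c₂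
    rw [hLd]
    let E : Matrix n n k → k → Matrix n n k :=
      fun x s => 1 + s • x + s ^ 2 • ((2⁻¹ : k) • (x * x))
    let V₁ := fromCols (x₁ * (h₁ * A₁)) (x₂ * (h₂ * A₂))
    let V₂ := fromCols ((2⁻¹ : k) • (x₁ * x₁) * (h₁ * A₁)) ((2⁻¹ : k) • (x₂ * x₂) * (h₂ * A₂))
    have hV : ∀ s : k, fromCols (E x₁ s * h₁ * A₁) (E x₂ s * h₂ * A₂) =
        fromCols (h₁ * A₁) (h₂ * A₂) + s • V₁ + s ^ 2 • V₂ := by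
      intro s
      ext i (j | j) <;> simp [E, V₁, V₂, Matrix.add_mul, Matrix.mul_assoc]
    obtain ⟨F, hF, hFinj⟩ := LinearMap.exists_polynomial_injective
      (tangentPairing Ω (fromCols (h₁ * A₁) (h₂ * A₂))) (tangentPairing Ω V₁)
      (tangentPairing Ω V₂) hinj
    refine MvPolynomial.trace_gradient_mul_tangent P (fromCols (h₁ * A₁) (h₂ * A₂) * g) (V₁ * g)
      (V₂ * g) F hF fun s hs => hP _ ⟨E x₁ s * h₁, E x₂ s * h₂, g, ?_, ?_, e₃, ?_, ?_⟩
    · rw [Matrix.transpose_mul, Matrix.mul_assoc, ← Matrix.mul_assoc (E x₁ s)ᵀ,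
        Matrix.transpose_mul_self_exp s₁ c₁, Matrix.one_mul, e₁]
    · rw [Matrix.transpose_mul, Matrix.mul_assoc, ← Matrix.mul_assoc (E x₂ s)ᵀ,
        Matrix.transpose_mul_self_exp s₂ c₂, Matrix.one_mul, e₂]
    · rw [hV, map_add, map_add, map_smul, map_smul]
      exact hFinj s hs
    · rw [hV, Matrix.add_mul, Matrix.add_mul, Matrix.smul_mul, Matrix.smul_mul]
  have hsymp : ∀ w : ι ⊕ ι → k,
      w ⬝ᵥ (Lᵀ * fromCols (h₁ * A₁) (h₂ * A₂) * Ω) *ᵥ w = 0 := by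
    intro w
    have h1 := MvPolynomial.trace_gradient_mul_tangent P (fromCols (h₁ * A₁) (h₂ * A₂) * g)
      (fromCols (h₁ * A₁) (h₂ * A₂) * (Ω * vecMulVec w w) * g) 0 1 one_ne_zero
      fun s _ => hP _ ⟨h₁, h₂, (1 + s • (Ω * vecMulVec w w)) * g, e₁, e₂, ?_, hinj, ?_⟩
    · have h2 := (hLd (fromCols (h₁ * A₁) (h₂ * A₂) * (Ω * vecMulVec w w))).trans h1
      rwa [← Matrix.mul_assoc, ← Matrix.mul_assoc, Matrix.mul_vecMulVec, Matrix.trace_vecMulVec,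
        dotProduct_comm] at h2
    · rw [Matrix.transpose_mul]
      calc _ = (1 + s • (Ω * vecMulVec w w)) * (g * Ω * gᵀ) * (1 + s • (Ω * vecMulVec w w))ᵀ := by
            simp only [Matrix.mul_assoc]
        _ = Ω := by rw [e₃, Matrix.transvection_mul_skew_mul_transpose Ω hskew]
    · simp [Matrix.add_mul, Matrix.mul_add, Matrix.mul_assoc]
  have hL : L = 0 := by
    apply hinj
    rw [map_zero, tangentPairing_apply]
    have htr : ∀ X₁ X₂ : Matrix n ι k, (Lᵀ * fromCols X₁ X₂).trace =
        (L.toCols₁ᵀ * X₁).trace + (L.toCols₂ᵀ * X₂).trace := by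
      intro X₁ X₂
      simp [Matrix.trace, Matrix.mul_apply, toCols₁, toCols₂]
    refine Prod.ext ?_ (Prod.ext ?_ (Matrix.add_transpose_eq_zero_of_forall _ hsymp))
    · refine sub_eq_zero.2 ?_
      have := Matrix.eq_transpose_of_forall_isotropic hn (h₁ * A₁ * L.toCols₁ᵀ) fun u v huu huv => by
        obtain ⟨s, c⟩ := Matrix.skew_rank_two_cube huu huv
        have := horth _ 0 s (by simp) c (by simp)
        rw [htr] at this
        simpa [Matrix.trace_mul_comm L.toCols₁ᵀ, Matrix.mul_assoc] using this
      simpa [Matrix.transpose_mul] using this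
    · refine sub_eq_zero.2 ?_
      have := Matrix.eq_transpose_of_forall_isotropic hn (h₂ * A₂ * L.toCols₂ᵀ) fun u v huu huv => by
        obtain ⟨s, c⟩ := Matrix.skew_rank_two_cube huu huv
        have := horth 0 _ (by simp) s (by simp) c
        rw [htr] at this
        simpa [Matrix.trace_mul_comm L.toCols₂ᵀ, Matrix.mul_assoc] using this
      simpa [Matrix.transpose_mul] using this
  have hd : d = 0 := by
    have hg : IsUnit gᵀ.det := by
      rw [Matrix.det_transpose]
      exact Matrix.isUnit_of_mul_mul_transpose_eq hΩ e₃
    calc d = d * gᵀ * gᵀ⁻¹ := by rw [Matrix.mul_assoc, Matrix.mul_nonsing_inv _ hg, Matrix.mul_one]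
      _ = 0 := by rw [show d * gᵀ = 0 from hL, Matrix.zero_mul]
  exact fun q => congrFun (congrFun hd q.1) q.2

end OrbitDensity

section Secant

variable {k : Type*} [Field k]

theorem Matrix.rank_add_le_rank_add_rank {n : Type*} [Fintype n] (x y : Matrix n n k) :
    (x + y).rank ≤ x.rank + y.rank := by
  refine le_trans (Submodule.finrank_mono ?_)
    (Submodule.finrank_add_le_finrank_add_finrank (LinearMap.range x.mulVecLin)
      (LinearMap.range y.mulVecLin))
  rw [Matrix.mulVecLin_add]
  exact LinearMap.range_add_le _ _

theorem Matrix.exists_mul_mul_eq_one {n : Type*} [Fintype n] [DecidableEq n] (M : Matrix n n k) :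
    ∃ (R : Matrix (Fin M.rank) n k) (C : Matrix n (Fin M.rank) k), R * M * C = 1 := by
  obtain ⟨V, U, e, -, -, h⟩ := M.exists_rank_normal_form
  refine ⟨V.submatrix (e.symm ∘ Sum.inl) id, U.submatrix id (e.symm ∘ Sum.inl), ?_⟩
  have h1 : V.submatrix (e.symm ∘ Sum.inl) id * M * U.submatrix id (e.symm ∘ Sum.inl) =
      (V * M * U).submatrix (e.symm ∘ Sum.inl) (e.symm ∘ Sum.inl) := rfl
  rw [h1, h]
  ext i j
  simp [Matrix.submatrix]

theorem transpose_eq_neg_of_mem_zClosure {N : ℕ} {S : Set (Matrix (Fin N) (Fin N) k)}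
    (hS : ∀ x ∈ S, xᵀ = -x) {M : Matrix (Fin N) (Fin N) k} (hM : M ∈ zClosure S) : Mᵀ = -M := by
  ext i j
  have h1 := hM (MvPolynomial.X (j, i) + MvPolynomial.X (i, j)) fun x hx => by
    have := congrFun (congrFun (hS x hx) i) j
    rw [Matrix.transpose_apply, Matrix.neg_apply] at this
    simp [this]
  simpa [eq_neg_iff_add_eq_zero] using h1

theorem rank_le_of_mem_zClosure {N r : ℕ} {S : Set (Matrix (Fin N) (Fin N) k)}
    (hS : ∀ x ∈ S, x.rank ≤ r) {M : Matrix (Fin N) (Fin N) k} (hM : M ∈ zClosure S) :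
    M.rank ≤ r := by
  by_contra! hr
  obtain ⟨R, C, hRC⟩ := M.exists_mul_mul_eq_one
  let P : MvPolynomial (Fin N × Fin N) k :=
    (R.map (MvPolynomial.C (σ := Fin N × Fin N)) * mvPolynomialX (Fin N) (Fin N) k *
      C.map (MvPolynomial.C (σ := Fin N × Fin N))).det
  have hP : ∀ x : Matrix (Fin N) (Fin N) k,
      MvPolynomial.eval (fun q => x q.1 q.2) P = (R * x * C).det := by
    intro x
    rw [RingHom.map_det]
    congr 1
    ext i j
    simp [Matrix.mul_apply, mvPolynomialX]
  have h1 := hM P fun x hx => by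
    rw [hP]
    by_contra hdet
    have h2 := Matrix.rank_of_isUnit _
      ((Matrix.isUnit_iff_isUnit_det _).2 (isUnit_iff_ne_zero.2 hdet))
    have h3 := (Matrix.rank_mul_le_left (R * x) C).trans (Matrix.rank_mul_le_right R x)
    rw [h2, Fintype.card_fin] at h3
    exact absurd (h3.trans (hS x hx)) (not_le.2 hr)
  rw [hP, hRC, Matrix.det_one] at h1
  exact one_ne_zero h1

/-- The polynomial `P (A Ω Aᵀ)` in the entries of `A`. -/
theorem MvPolynomial.exists_eval_mul_mul_transpose {n c : Type*} [Fintype n] [Fintype c]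
    (Ω : Matrix c c k) (P : MvPolynomial (n × n) k) : ∃ Q : MvPolynomial (n × c) k,
      ∀ A : Matrix n c k, MvPolynomial.eval (fun q => A q.1 q.2) Q =
        MvPolynomial.eval (fun q => (A * Ω * Aᵀ) q.1 q.2) P := by
  refine ⟨MvPolynomial.bind₁ (fun q => (mvPolynomialX n c k *
    Ω.map (MvPolynomial.C (σ := n × c)) * (mvPolynomialX n c k)ᵀ) q.1 q.2) P, fun A => ?_⟩
  rw [← MvPolynomial.aeval_eq_eval, MvPolynomial.aeval_bind₁, ← MvPolynomial.aeval_eq_eval]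
  congr 2
  funext q
  simp [Matrix.mul_apply, mvPolynomialX]

theorem exists_base_point [IsAlgClosed k] [CharZero k] {N m : ℕ} (hmN : 4 * m ≤ N)
    (s : Multiset ℕ) (hs : ∀ d, Odd d → Even (s.count d)) (hsum : s.sum = 2 * m)
    (h1 : (s.map (· - 1)).sum ≠ 0) :
    ∃ A₁ A₂ : Matrix (Fin N) (Fin m ⊕ Fin m) k,
      (∀ h : Matrix (Fin N) (Fin N) k, hᵀ * h = 1 → ∀ i : ℕ,
        ((h * A₁ * J (Fin m) k * (h * A₁)ᵀ) ^ (i + 1)).rank = (s.map (· - i)).sum) ∧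
      (∀ h : Matrix (Fin N) (Fin N) k, hᵀ * h = 1 → ∀ i : ℕ,
        ((h * A₂ * J (Fin m) k * (h * A₂)ᵀ) ^ (i + 1)).rank = (s.map (· - i)).sum) ∧
      Function.Injective
        (tangentPairing (fromBlocks (J (Fin m) k) 0 0 (J (Fin m) k)) (fromCols A₁ A₂)) := by
  obtain ⟨G₁, G₂, hG₁, hG₂, hr₁, hr₂, hd, hu⟩ := exists_gram_matrix (k := k) m s hs hsum h1
  obtain ⟨A, hA⟩ := Matrix.exists_transpose_mul_self_eq (N := N)
    (by simp only [Fintype.card_sum, Fintype.card_fin]; omega)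
    (fromBlocks G₁ (J (Fin m) k * planeDiagonal k m) (J (Fin m) k * planeDiagonal k m)ᵀ G₂)
    (by rw [fromBlocks_transpose, hG₁, hG₂, Matrix.transpose_transpose])
  have hleft : (fromBlocks G₁ (J (Fin m) k * planeDiagonal k m)
      (J (Fin m) k * planeDiagonal k m)ᵀ G₂)⁻¹ * Aᵀ * A = 1 := by
    rw [Matrix.mul_assoc, hA, Matrix.nonsing_inv_mul _ hu]
  generalize (fromBlocks G₁ (J (Fin m) k * planeDiagonal k m)
      (J (Fin m) k * planeDiagonal k m)ᵀ G₂)⁻¹ * Aᵀ = A' at hleft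
  rw [← fromCols_toCols A, ← fromRows_toRows A', fromRows_mul_fromCols, ← fromBlocks_one,
    fromBlocks_inj] at hleft
  rw [← fromCols_toCols A, transpose_fromCols, fromRows_mul_fromCols, fromBlocks_inj] at hA
  have hrank : ∀ (B : Matrix (Fin N) (Fin m ⊕ Fin m) k) (B' : Matrix (Fin m ⊕ Fin m) (Fin N) k),
      B' * B = 1 → ∀ G, Bᵀ * B = G →
      (∀ i : ℕ, ((J (Fin m) k * G) ^ i).rank = (s.map (· - i)).sum) →
      ∀ h : Matrix (Fin N) (Fin N) k, hᵀ * h = 1 → ∀ i : ℕ,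
        ((h * B * J (Fin m) k * (h * B)ᵀ) ^ (i + 1)).rank = (s.map (· - i)).sum := by
    intro B B' hB G hG hr h hh i
    have hcancel : ∀ X : Matrix (Fin m ⊕ Fin m) (Fin N) k, X * hᵀ * (h * B) = X * B := by
      intro X
      rw [Matrix.mul_assoc, ← Matrix.mul_assoc hᵀ, hh, Matrix.one_mul]
    rw [Matrix.rank_mul_skew_mul_transpose_pow (h * B) (B' * hᵀ) (by rw [hcancel, hB]) _
      (isUnit_det_J _ _), Matrix.transpose_mul, hcancel, hG, hr]
  exact ⟨A.toCols₁, A.toCols₂, hrank _ _ hleft.1 _ hA.1 hr₁,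
    hrank _ _ hleft.2.2.2 _ hA.2.2.2 hr₂,
    tangentPairing_injective hd hleft.1 hleft.2.2.2 hA.1 hA.2.2.2 hA.2.1⟩

theorem mem_zClosure_of_rank_le [IsAlgClosed k] [CharZero k] {N m : ℕ} (hN : 3 ≤ N)
    {O : Set (Matrix (Fin N) (Fin N) k)} {A₁ A₂ : Matrix (Fin N) (Fin m ⊕ Fin m) k}
    (h₁ : ∀ h : Matrix (Fin N) (Fin N) k, hᵀ * h = 1 → h * A₁ * J (Fin m) k * (h * A₁)ᵀ ∈ O)
    (h₂ : ∀ h : Matrix (Fin N) (Fin N) k, hᵀ * h = 1 → h * A₂ * J (Fin m) k * (h * A₂)ᵀ ∈ O)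
    (hinj : Function.Injective
      (tangentPairing (fromBlocks (J (Fin m) k) 0 0 (J (Fin m) k)) (fromCols A₁ A₂)))
    {M : Matrix (Fin N) (Fin N) k} (hM : Mᵀ = -M) (hr : M.rank ≤ 4 * m) :
    M ∈ zClosure (Set.image2 (· + ·) O O) := by
  intro P hP
  have hskew : (fromBlocks (J (Fin m) k) 0 0 (J (Fin m) k))ᵀ =
      -fromBlocks (J (Fin m) k) 0 0 (J (Fin m) k) := by
    simp [fromBlocks_transpose, fromBlocks_neg, J_transpose]
  have hu : IsUnit (fromBlocks (J (Fin m) k) 0 0 (J (Fin m) k)).det := by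
    rw [Matrix.det_fromBlocks_zero₂₁]
    exact (isUnit_det_J _ _).mul (isUnit_det_J _ _)
  obtain ⟨Q, hQ⟩ := MvPolynomial.exists_eval_mul_mul_transpose
    (fromBlocks (J (Fin m) k) 0 0 (J (Fin m) k)) P
  have hQ0 : Q = 0 := by
    refine eq_zero_of_vanishes_on_moves (by simpa using hN) _ hskew hu A₁ A₂ hinj Q
      fun x y g hx hy hg => ?_
    rw [hQ]
    have hxy : fromCols (x * A₁) (y * A₂) * g * fromBlocks (J (Fin m) k) 0 0 (J (Fin m) k) *
        (fromCols (x * A₁) (y * A₂) * g)ᵀ = x * A₁ * J (Fin m) k * (x * A₁)ᵀ +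
          y * A₂ * J (Fin m) k * (y * A₂)ᵀ := by
      calc _ = fromCols (x * A₁) (y * A₂) *
            (g * fromBlocks (J (Fin m) k) 0 0 (J (Fin m) k) * gᵀ) *
            (fromCols (x * A₁) (y * A₂))ᵀ := by
              rw [Matrix.transpose_mul]
              simp only [Matrix.mul_assoc]
        _ = _ := by
              rw [hg, fromCols_mul_fromBlocks, transpose_fromCols, fromCols_mul_fromRows]
              simp only [Matrix.mul_zero, add_zero, zero_add]
    rw [hxy]
    exact hP _ ⟨_, h₁ x hx, _, h₂ y hy, rfl⟩
  obtain ⟨A, rfl⟩ := Matrix.exists_eq_mul_skew_mul_transpose (2 * m)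
    (by simp only [Fintype.card_sum, Fintype.card_fin]; omega)
    (fromBlocks (J (Fin m) k) 0 0 (J (Fin m) k)) hskew hu M hM (by omega)
  rw [← hQ, hQ0, map_zero]

end Secant

/-- For an orthogonal partition `λ` of `N ≥ 7` with `λ₁ ≥ 3` and `2m := N − p < ⌊N/2⌋`,
the conical secant variety of the nilpotent `SO_N`-orbit `O_λ ∩ so_N` is the
skew-symmetric determinantal variety of rank at most `4m`. -/
theorem stmt6 {k : Type*} [Field k] [IsAlgClosed k] [CharZero k]
    {N p m : ℕ} (hN : 7 ≤ N) (hp : 0 < p) (lam : Fin p → ℕ)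
    (hanti : Antitone lam) (hpos : ∀ l, 1 ≤ lam l)
    (hsum : ∑ l, lam l = N)
    (horth : IsOrthogonalParts lam)
    (hl1 : 3 ≤ lam ⟨0, hp⟩)
    (hm : N - p = 2 * m) (hsmall : 2 * m < N / 2) :
    zClosure (Set.image2 (· + ·) (jordanOrbit k N lam ∩ soSet k N)
        (jordanOrbit k N lam ∩ soSet k N))
      = {M : Matrix (Fin N) (Fin N) k | Mᵀ = -M ∧ M.rank ≤ 4 * m} := by
  have hsub : ∑ l, (lam l - 1) = 2 * m := by
    rw [Finset.sum_tsub_distrib _ fun l _ => hpos l, hsum, ← hm]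
    simp
  refine Set.Subset.antisymm (fun M hM => ⟨?_, ?_⟩) fun M ⟨hM, hr⟩ => ?_
  · refine transpose_eq_neg_of_mem_zClosure ?_ hM
    rintro _ ⟨x, ⟨-, hx⟩, y, ⟨-, hy⟩, rfl⟩
    rw [Matrix.transpose_add, show xᵀ = -x from hx, show yᵀ = -y from hy, neg_add]
  · refine rank_le_of_mem_zClosure ?_ hM
    rintro _ ⟨x, ⟨hx, -⟩, y, ⟨hy, -⟩, rfl⟩
    have h1 := hx 1 le_rfl
    have h2 := hy 1 le_rfl
    rw [pow_one, hsub] at h1 h2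
    exact (Matrix.rank_add_le_rank_add_rank x y).trans (by omega)
  · let s : Multiset ℕ := Finset.univ.val.map fun l => lam l - 1
    have hs : ∀ d, Odd d → Even (s.count d) := by
      intro d hd
      have h1 := horth (d + 1) d.succ_pos hd.add_one
      have h2 : s.count d = (Finset.univ.filter fun l => lam l = d + 1).card := by
        rw [Multiset.count_map, ← Finset.filter_val, Finset.card_val]
        congr 1
        ext l
        have := hpos l
        simp only [Finset.mem_filter, Finset.mem_univ, true_and]
        omega
      rwa [h2]
    have hmap : ∀ i : ℕ, (s.map (· - i)).sum = ∑ l, (lam l - (i + 1)) := by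
      intro i
      rw [Multiset.map_map]
      refine Finset.sum_congr rfl fun l _ => ?_
      simp only [Function.comp_apply]
      omega
    obtain ⟨A₁, A₂, h₁, h₂, hinj⟩ := exists_base_point (k := k) (N := N) (m := m) (by omega) s hs
      hsub (by
        rw [hmap, ← Nat.pos_iff_ne_zero]
        exact Finset.sum_pos' (fun _ _ => Nat.zero_le _) ⟨⟨0, hp⟩, Finset.mem_univ _, by omega⟩)
    have hmem : ∀ A : Matrix (Fin N) (Fin m ⊕ Fin m) k,
        (∀ i : ℕ, ((A * J (Fin m) k * Aᵀ) ^ (i + 1)).rank = (s.map (· - i)).sum) →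
        A * J (Fin m) k * Aᵀ ∈ jordanOrbit k N lam ∩ soSet k N := by
      refine fun A hA => ⟨fun i hi => ?_, ?_⟩
      · obtain ⟨i, rfl⟩ := Nat.exists_eq_succ_of_ne_zero (Nat.one_le_iff_ne_zero.1 hi)
        rw [Nat.succ_eq_add_one, hA, hmap]
      · change (A * J (Fin m) k * Aᵀ)ᵀ = -(A * J (Fin m) k * Aᵀ)
        simp [Matrix.transpose_mul, J_transpose, Matrix.mul_assoc]
    exact mem_zClosure_of_rank_le (by omega) (fun h hh => hmem _ (h₁ h hh))
      (fun h hh => hmem _ (h₂ h hh)) hinj hM hr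
end
end

section
/- Let N ≥ 5 and 2 ≤ j ≤ ⌊(N−1)/2⌋. The map λ ↦ λ' (erasing the first column of the Young diagram) is a bijection from the set A_j = {partitions λ of N with λ₁ ≥ 3 and N − p(λ) = j} onto the set of partitions ν of j with ν₁ ≥ 2, and for all λ, μ ∈ A_j one has λ ⊴ μ in the dominance order if and only if λ' ⊴ μ'. (Hence the subposet Υ_j of nilpotent SL_N-orbits is isomorphic, as a poset under closure order, to the poset of nonzero nilpotent orbits of sl_j.) -/
noncomputable section

/-- A partition of `n`, represented as an antitone function `ℕ → ℕ` (the parts in weakly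
decreasing order, padded by zeros), vanishing from index `n` on and summing to `n`. -/
def IsPartitionOf (n : ℕ) (f : ℕ → ℕ) : Prop :=
  Antitone f ∧ f n = 0 ∧ ∑ i ∈ Finset.range n, f i = n

/-- The number of (nonzero) parts of a partition of `n`. -/
def numParts (n : ℕ) (f : ℕ → ℕ) : ℕ :=
  ((Finset.range n).filter (fun i => f i ≠ 0)).card

/-- The dominance order on partitions: `f ⊴ g` iff all partial sums of `f` are at most
the corresponding partial sums of `g`. -/
def Dominates (f g : ℕ → ℕ) : Prop :=
  ∀ m : ℕ, ∑ i ∈ Finset.range m, f i ≤ ∑ i ∈ Finset.range m, g i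

/-- Erasing the first column of the Young diagram: each part decreases by `1`
(zero parts are automatically discarded in this representation). -/
def eraseCol (f : ℕ → ℕ) : ℕ → ℕ := fun i => f i - 1

/-- The nonzero entries of a partition are exactly the first `numParts` ones. -/
theorem ne_zero_iff_lt_numParts {n : ℕ} {f : ℕ → ℕ} (hf : Antitone f) (hn : f n = 0) (i : ℕ) :
    f i ≠ 0 ↔ i < numParts n f := by
  classical
  have hex : ∃ k, f k = 0 := ⟨n, hn⟩
  have hlt : ∀ i, f i ≠ 0 ↔ i < Nat.find hex := by
    intro i
    rw [Nat.lt_find_iff]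
    refine ⟨fun hi m hm h0 => hi ?_, fun h => h i le_rfl⟩
    have := hf hm
    omega
  have hle : Nat.find hex ≤ n := Nat.find_min' hex hn
  have hfilter : (Finset.range n).filter (fun i => f i ≠ 0) = Finset.range (Nat.find hex) := by
    ext i
    simp only [Finset.mem_filter, Finset.mem_range, hlt]
    omega
  rw [hlt, numParts, hfilter, Finset.card_range]

theorem numParts_le (n : ℕ) (f : ℕ → ℕ) : numParts n f ≤ n :=
  (Finset.card_filter_le _ _).trans (Finset.card_range n).le

/-- A partition is recovered from its first-column erasure and its number of parts. -/
theorem eq_eraseCol_add {n : ℕ} {f : ℕ → ℕ} (hf : Antitone f) (hn : f n = 0) (i : ℕ) :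
    f i = eraseCol f i + if i < numParts n f then 1 else 0 := by
  have h := ne_zero_iff_lt_numParts hf hn i
  unfold eraseCol
  split_ifs <;> omega

theorem antitone_eraseCol {f : ℕ → ℕ} (hf : Antitone f) : Antitone (eraseCol f) :=
  fun _ _ h => Nat.sub_le_sub_right (hf h) 1

theorem sum_range_ite_lt {p n : ℕ} (h : p ≤ n) :
    ∑ i ∈ Finset.range n, (if i < p then 1 else 0) = p := by
  rw [← Finset.card_filter]
  have : (Finset.range n).filter (· < p) = Finset.range p := by
    ext i
    simp only [Finset.mem_filter, Finset.mem_range]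
    omega
  rw [this, Finset.card_range]

theorem sum_range_eq_of_antitone {m n : ℕ} {f : ℕ → ℕ} (hf : Antitone f) (hm : f m = 0)
    (h : m ≤ n) : ∑ i ∈ Finset.range m, f i = ∑ i ∈ Finset.range n, f i := by
  refine Finset.sum_subset (Finset.range_subset_range.2 h) fun i _ hi => ?_
  have := hf (not_lt.1 (mt Finset.mem_range.2 hi))
  omega

/-- An antitone sequence with `∑ i < n, f i = j < n` is a partition of `j`. -/
theorem isPartitionOf_of_sum_range {n j : ℕ} {f : ℕ → ℕ} (hf : Antitone f) (h : j < n)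
    (hs : ∑ i ∈ Finset.range n, f i = j) : IsPartitionOf j f := by
  have hj : f j = 0 := by
    by_contra h0
    have h1 : ∑ _i ∈ Finset.range (j + 1), 1 ≤ ∑ i ∈ Finset.range (j + 1), f i := by
      refine Finset.sum_le_sum fun i hi => ?_
      have := hf (Nat.lt_succ_iff.1 (Finset.mem_range.1 hi))
      omega
    have h2 : ∑ i ∈ Finset.range (j + 1), f i ≤ ∑ i ∈ Finset.range n, f i :=
      Finset.sum_le_sum_of_subset (Finset.range_subset_range.2 h)
    simp only [Finset.sum_const, Finset.card_range, smul_eq_mul, mul_one] at h1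
    omega
  exact ⟨hf, hj, (sum_range_eq_of_antitone hf hj h.le).trans hs⟩

theorem isPartitionOf_eraseCol {n j : ℕ} {f : ℕ → ℕ} (hf : IsPartitionOf n f) (hjn : j < n)
    (h : n - numParts n f = j) : IsPartitionOf j (eraseCol f) := by
  obtain ⟨ha, hz, hs⟩ := hf
  refine isPartitionOf_of_sum_range (antitone_eraseCol ha) hjn ?_
  rw [Finset.sum_congr rfl fun i _ => eq_eraseCol_add ha hz i, Finset.sum_add_distrib,
    sum_range_ite_lt (numParts_le n f)] at hs
  omega

/-- Adding a column of length `p ≥ j` to a partition of `j`. -/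
theorem eraseCol_addCol {j p : ℕ} {g : ℕ → ℕ} (hg : IsPartitionOf j g) (hp : j ≤ p) :
    eraseCol (fun i => g i + if i < p then 1 else 0) = g := by
  funext i
  unfold eraseCol
  dsimp only
  split_ifs with h
  · rfl
  · have := hg.1 (hp.trans (not_lt.1 h))
    have := hg.2.1
    omega

theorem isPartitionOf_addCol {j p : ℕ} {g : ℕ → ℕ} (hg : IsPartitionOf j g) :
    IsPartitionOf (j + p) (fun i => g i + if i < p then 1 else 0) := by
  obtain ⟨ha, hz, hs⟩ := hg
  refine ⟨fun a b hab => ?_, ?_, ?_⟩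
  · have := ha hab
    dsimp only
    split_ifs <;> omega
  · have := ha (Nat.le_add_right j p)
    dsimp only
    split_ifs <;> omega
  · rw [Finset.sum_add_distrib, sum_range_ite_lt (Nat.le_add_left p j),
      ← sum_range_eq_of_antitone ha hz (Nat.le_add_right j p), hs]

theorem numParts_addCol {j p : ℕ} {g : ℕ → ℕ} (hg : IsPartitionOf j g) (hp : j ≤ p) :
    numParts (j + p) (fun i => g i + if i < p then 1 else 0) = p := by
  have hf := isPartitionOf_addCol (p := p) hg
  have hs := hf.2.2
  rw [Finset.sum_congr rfl fun i _ => eq_eraseCol_add hf.1 hf.2.1 i, Finset.sum_add_distrib,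
    sum_range_ite_lt (numParts_le _ _), eraseCol_addCol hg hp,
    ← sum_range_eq_of_antitone hg.1 hg.2.1 (Nat.le_add_right j p), hg.2.2] at hs
  omega

/-- For partitions with equally many parts, erasing the first column preserves and reflects
dominance. -/
theorem dominates_iff_eraseCol {n : ℕ} {f g : ℕ → ℕ} (hf : IsPartitionOf n f)
    (hg : IsPartitionOf n g) (h : numParts n f = numParts n g) :
    Dominates f g ↔ Dominates (eraseCol f) (eraseCol g) := by
  refine forall_congr' fun m => ?_
  rw [Finset.sum_congr rfl fun i _ => eq_eraseCol_add hf.1 hf.2.1 i,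
    Finset.sum_congr (f := g) rfl fun i _ => eq_eraseCol_add hg.1 hg.2.1 i,
    Finset.sum_add_distrib, Finset.sum_add_distrib, h]
  exact Nat.add_le_add_iff_right

/-- For `N ≥ 5` and `2 ≤ j ≤ ⌊(N−1)/2⌋`, erasing the first column is a bijection from
`A_j = {λ ⊢ N : λ₁ ≥ 3, N − p(λ) = j}` onto `{ν ⊢ j : ν₁ ≥ 2}`, and it preserves and
reflects the dominance order on `A_j`. -/
theorem stmt7 (N j : ℕ) (hN : 5 ≤ N) (hj2 : 2 ≤ j) (hj : j ≤ (N - 1) / 2) :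
    Set.BijOn eraseCol
      {f | IsPartitionOf N f ∧ 3 ≤ f 0 ∧ N - numParts N f = j}
      {g | IsPartitionOf j g ∧ 2 ≤ g 0} ∧
    ∀ f ∈ {f : ℕ → ℕ | IsPartitionOf N f ∧ 3 ≤ f 0 ∧ N - numParts N f = j},
      ∀ g ∈ {f : ℕ → ℕ | IsPartitionOf N f ∧ 3 ≤ f 0 ∧ N - numParts N f = j},
        (Dominates f g ↔ Dominates (eraseCol f) (eraseCol g)) := by
  have hparts : ∀ f : ℕ → ℕ, N - numParts N f = j → numParts N f = N - j := by
    intro f hf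
    have := numParts_le N f
    omega
  refine ⟨⟨?_, ?_, ?_⟩, ?_⟩
  · rintro f ⟨hf, h3, hp⟩
    exact ⟨isPartitionOf_eraseCol hf (by omega) hp, Nat.sub_le_sub_right h3 1⟩
  · rintro f ⟨hf, -, hp⟩ g ⟨hg, -, hq⟩ hfg
    funext i
    rw [eq_eraseCol_add hf.1 hf.2.1 i, eq_eraseCol_add hg.1 hg.2.1 i, hfg, hparts f hp,
      hparts g hq]
  · rintro g ⟨hg, h2⟩
    obtain ⟨p, rfl⟩ : ∃ p, N = j + p := ⟨N - j, by omega⟩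
    have hjp : j ≤ p := by omega
    refine ⟨_, ⟨isPartitionOf_addCol (p := p) hg, ?_, ?_⟩, eraseCol_addCol hg hjp⟩
    · rw [if_pos (by omega)]
      omega
    · rw [numParts_addCol hg hjp]
      omega
  · rintro f ⟨hf, -, hp⟩ g ⟨hg, -, hq⟩
    exact dominates_iff_eraseCol hf hg ((hparts f hp).trans (hparts g hq).symm)
end
end

section
/- Let n ≥ 2 and 1 ≤ j ≤ n − 1. The map λ ↦ λ' (erasing the first column of the Young diagram) is a bijection from the set A_j = {symplectic partitions λ of 2n with 2n − p(λ) = j} onto the set of all orthogonal partitions of j (including the partition (1^j)), and for all λ, μ ∈ A_j one has λ ⊴ μ in the dominance order if and only if λ' ⊴ μ'. (Hence the subposet Υ_j of nilpotent Sp_{2n}-orbits is isomorphic, as a poset under closure order, to the poset of all nilpotent orbits of so_j.) -/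
noncomputable section

/-- The multiplicity of `m` as a part of a partition of `n`. -/
def multPart (n : ℕ) (f : ℕ → ℕ) (m : ℕ) : ℕ :=
  ((Finset.range n).filter (fun i => f i = m)).card

/-- A symplectic partition of `n`: every odd part occurs with even multiplicity. -/
def SymplecticPartition (n : ℕ) (f : ℕ → ℕ) : Prop :=
  IsPartitionOf n f ∧ ∀ m : ℕ, Odd m → Even (multPart n f m)

/-- An orthogonal partition of `n`: every (nonzero) even part occurs with even
multiplicity. -/
def OrthogonalPartition (n : ℕ) (f : ℕ → ℕ) : Prop :=
  IsPartitionOf n f ∧ ∀ m : ℕ, 0 < m → Even m → Even (multPart n f m)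

/-- The nonzero entries of a partition are exactly those at the indices below `numParts`. -/
lemma IsPartitionOf.ne_zero_iff {N : ℕ} {f : ℕ → ℕ} (hf : IsPartitionOf N f) (i : ℕ) :
    f i ≠ 0 ↔ i < numParts N f := by
  have hex : ∃ k, f k = 0 := ⟨N, hf.2.1⟩
  have key : ∀ i, f i ≠ 0 ↔ i < Nat.find hex := by
    intro i
    rw [Nat.lt_find_iff]
    refine ⟨fun h m hm h0 => h ?_, fun h => h i le_rfl⟩
    have := hf.1 hm
    omega
  have hfilter : (Finset.range N).filter (fun i => f i ≠ 0) = Finset.range (Nat.find hex) := by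
    ext i
    have hle : Nat.find hex ≤ N := Nat.find_min' hex hf.2.1
    simp only [Finset.mem_filter, Finset.mem_range, key]
    omega
  rw [key, numParts, hfilter, Finset.card_range]

/-- A partial sum splits into the first column and the rest of the diagram. -/
lemma sum_range_eq_sum_eraseCol_add {f : ℕ → ℕ} {p : ℕ} (hf : ∀ i, f i ≠ 0 ↔ i < p) (m : ℕ) :
    ∑ i ∈ Finset.range m, f i = ∑ i ∈ Finset.range m, eraseCol f i + min m p := by
  induction m with
  | zero => simp
  | succ m ih =>
    rw [Finset.sum_range_succ, Finset.sum_range_succ, ih, eraseCol]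
    have := hf m
    omega

/-- An antitone sequence vanishes at any index which bounds its partial sums. -/
lemma Antitone.eq_zero_of_sum_range_le {g : ℕ → ℕ} (hg : Antitone g) {j : ℕ}
    (hsum : ∑ i ∈ Finset.range (j + 1), g i ≤ j) : g j = 0 := by
  by_contra h
  have := Finset.card_nsmul_le_sum (Finset.range (j + 1)) g 1 fun i hi =>
    (Nat.one_le_iff_ne_zero.2 h).trans (hg (Nat.lt_succ_iff.1 (Finset.mem_range.1 hi)))
  rw [Finset.card_range, smul_eq_mul, mul_one] at this
  exact absurd (this.trans hsum) (Nat.not_succ_le_self j)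

lemma multPart_eq_multPart_add_one {M N : ℕ} {f g : ℕ → ℕ} {m : ℕ}
    (h : ∀ i, (i < M ∧ g i = m) ↔ (i < N ∧ f i = m + 1)) :
    multPart M g m = multPart N f (m + 1) := by
  unfold multPart
  congr 1
  ext i
  simpa using h i

/-- The number of odd parts of a partition of an even integer is even, so the parity condition
on the part `1` of a symplectic partition is a consequence of the others. -/
lemma even_multPart_one {N : ℕ} {f : ℕ → ℕ} (hsum : Even (∑ i ∈ Finset.range N, f i))
    (hmult : ∀ m, Odd m → m ≠ 1 → Even (multPart N f m)) : Even (multPart N f 1) := by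
  rw [Finset.even_sum_iff_even_card_odd] at hsum
  have hmaps : ∀ i ∈ (Finset.range N).filter (fun i => Odd (f i)),
      f i ∈ insert 1 (((Finset.range N).image f).filter Odd) := by
    intro i hi
    rw [Finset.mem_filter] at hi
    exact Finset.mem_insert_of_mem
      (Finset.mem_filter.2 ⟨Finset.mem_image_of_mem f hi.1, hi.2⟩)
  have hodd : ∀ m ∈ insert 1 (((Finset.range N).image f).filter Odd), Odd m := by
    simp +contextual
  have hfiber : ∀ m, Odd m →
      (((Finset.range N).filter (fun i => Odd (f i))).filter (fun i => f i = m)).card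
        = multPart N f m := by
    intro m hm
    rw [multPart, Finset.filter_filter]
    congr 1
    ext i
    simp only [Finset.mem_filter]
    grind
  rw [Finset.card_eq_sum_card_fiberwise hmaps,
    Finset.sum_congr rfl fun m hm => hfiber m (hodd m hm),
    ← Finset.add_sum_erase _ _ (Finset.mem_insert_self 1 _)] at hsum
  refine (Nat.even_add.1 hsum).2 (Finset.even_sum _ fun m hm => ?_)
  rw [Finset.mem_erase] at hm
  exact hmult m (hodd m hm.2) hm.1

lemma orthogonalPartition_eraseCol {N j : ℕ} {f : ℕ → ℕ} (hjN : j < N)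
    (hf : SymplecticPartition N f) (hp : ∀ i, f i ≠ 0 ↔ i < N - j) :
    OrthogonalPartition j (eraseCol f) := by
  obtain ⟨⟨hanti, -, hsum⟩, hmult⟩ := hf
  have hanti' : Antitone (eraseCol f) := fun a b hab => Nat.sub_le_sub_right (hanti hab) 1
  have hsumN : ∑ i ∈ Finset.range N, eraseCol f i = j := by
    have := sum_range_eq_sum_eraseCol_add hp N
    omega
  have hle : ∑ i ∈ Finset.range (j + 1), eraseCol f i ≤ j :=
    (Finset.sum_le_sum_of_subset (Finset.range_mono hjN)).trans hsumN.le
  have hzero := hanti'.eq_zero_of_sum_range_le hle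
  have hvanish : ∀ i, j ≤ i → eraseCol f i = 0 := fun i hi =>
    Nat.le_zero.1 (hzero ▸ hanti' hi)
  refine ⟨⟨hanti', hzero, ?_⟩, fun m hm hme => ?_⟩
  · refine (Finset.sum_subset (Finset.range_mono hjN.le) fun i _ hi => hvanish i ?_).trans hsumN
    simpa using hi
  · rw [multPart_eq_multPart_add_one (N := N) (f := f)]
    · exact hmult _ hme.add_one
    · intro i
      have := hvanish i
      simp only [eraseCol] at this ⊢
      omega

/-- Adding a first column of length `p` to a Young diagram. -/
def addCol (p : ℕ) (g : ℕ → ℕ) : ℕ → ℕ := fun i => if i < p then g i + 1 else 0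

lemma addCol_ne_zero_iff (p : ℕ) (g : ℕ → ℕ) (i : ℕ) : addCol p g i ≠ 0 ↔ i < p := by
  simp [addCol]

lemma eraseCol_addCol_s8 {p : ℕ} {g : ℕ → ℕ} (hg : ∀ i, p ≤ i → g i = 0) :
    eraseCol (addCol p g) = g := by
  funext i
  have := hg i
  simp only [eraseCol, addCol]
  split_ifs <;> omega

lemma addCol_eraseCol {p : ℕ} {f : ℕ → ℕ} (hf : ∀ i, f i ≠ 0 ↔ i < p) :
    addCol p (eraseCol f) = f := by
  funext i
  have := hf i
  simp only [eraseCol, addCol]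
  split_ifs <;> omega

lemma symplecticPartition_addCol {N j : ℕ} {g : ℕ → ℕ} (hN : Even N) (hj : 2 * j ≤ N)
    (hg : OrthogonalPartition j g) : SymplecticPartition N (addCol (N - j) g) := by
  obtain ⟨⟨hanti, hzero, hsum⟩, hmult⟩ := hg
  have hvanish : ∀ i, j ≤ i → g i = 0 := fun i hi => Nat.le_zero.1 (hzero ▸ hanti hi)
  have hsumN : ∑ i ∈ Finset.range N, addCol (N - j) g i = N := by
    rw [sum_range_eq_sum_eraseCol_add (addCol_ne_zero_iff _ _),
      eraseCol_addCol_s8 fun i hi => hvanish i (by omega),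
      ← Finset.sum_subset (Finset.range_mono (by omega : j ≤ N))
        fun i _ hi => hvanish i (by simpa using hi), hsum]
    omega
  have hmult' : ∀ m, Odd m → m ≠ 1 → Even (multPart N (addCol (N - j) g) m) := by
    intro m hm hm1
    obtain ⟨k, rfl⟩ := hm
    rw [← multPart_eq_multPart_add_one (M := j) (g := g)]
    · exact hmult _ (by omega) (even_two_mul k)
    · intro i
      have := hvanish i
      grind [addCol]
  refine ⟨⟨fun a b hab => ?_, ?_, hsumN⟩, fun m hm => ?_⟩
  · have := hanti hab
    simp only [addCol]
    split_ifs <;> omega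
  · simp [addCol]
  · obtain rfl | hm1 := eq_or_ne m 1
    · exact even_multPart_one (by rwa [hsumN]) hmult'
    · exact hmult' m hm hm1

/-- For `n ≥ 2` and `1 ≤ j ≤ n − 1`, erasing the first column is a bijection from
`A_j = {symplectic λ ⊢ 2n : 2n − p(λ) = j}` onto the set of all orthogonal partitions
of `j`, and it preserves and reflects the dominance order on `A_j`. -/
theorem stmt8 (n j : ℕ) (hn : 2 ≤ n) (hj1 : 1 ≤ j) (hj : j ≤ n - 1) :
    Set.BijOn eraseCol
      {f | SymplecticPartition (2 * n) f ∧ 2 * n - numParts (2 * n) f = j}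
      {g | OrthogonalPartition j g} ∧
    ∀ f ∈ {f : ℕ → ℕ | SymplecticPartition (2 * n) f ∧ 2 * n - numParts (2 * n) f = j},
      ∀ g ∈ {f : ℕ → ℕ | SymplecticPartition (2 * n) f ∧ 2 * n - numParts (2 * n) f = j},
        (Dominates f g ↔ Dominates (eraseCol f) (eraseCol g)) := by
  have hparts : ∀ f ∈ {f : ℕ → ℕ | SymplecticPartition (2 * n) f ∧
      2 * n - numParts (2 * n) f = j}, ∀ i, f i ≠ 0 ↔ i < 2 * n - j := by
    rintro f ⟨hf, hfj⟩ i
    rw [hf.1.ne_zero_iff]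
    omega
  refine ⟨⟨fun f hf => ?_, fun f hf g hg hfg => ?_, fun g hg => ?_⟩, fun f hf g hg => ?_⟩
  · exact orthogonalPartition_eraseCol (by omega) hf.1 (hparts f hf)
  · rw [← addCol_eraseCol (hparts f hf), ← addCol_eraseCol (hparts g hg), hfg]
  · have hsymp := symplecticPartition_addCol (even_two_mul n) (by omega) hg
    refine ⟨addCol (2 * n - j) g, ⟨hsymp, ?_⟩, eraseCol_addCol_s8 fun i hi => ?_⟩
    · have hcard : numParts (2 * n) (addCol (2 * n - j) g) = 2 * n - j :=
        eq_of_forall_lt_iff fun i => by rw [← hsymp.1.ne_zero_iff, addCol_ne_zero_iff]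
      omega
    · exact Nat.le_zero.1 (hg.1.2.1 ▸ hg.1.1 (by omega : j ≤ i))
  · simp only [Dominates, sum_range_eq_sum_eraseCol_add (hparts f hf),
      sum_range_eq_sum_eraseCol_add (hparts g hg), add_le_add_iff_right]
end
end

section
/- Let N ≥ 4 and let P be the set of partitions λ of N satisfying λ₁ ≤ 2 or 2(N − p(λ)) < N. Then the maximal elements of P with respect to the dominance order are exactly: (2,2) if N = 4; the two partitions (2^n) and (n, 1^n) if N = 2n ≥ 6; and the single partition (n+1, 1^n) if N = 2n+1 ≥ 5. (These are precisely the partitions of the maximal nilpotent SL_N-orbits O whose conical secant variety CS(O) is not all of sl_N, i.e., whose secant variety is defective.) -/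
noncomputable section

/-- The maximal elements of a set of partitions with respect to the dominance order. -/
def maximalsIn (P : Set (ℕ → ℕ)) : Set (ℕ → ℕ) :=
  {f | f ∈ P ∧ ∀ g ∈ P, Dominates f g → f = g}

/-- The partition `(2^r)`. -/
def twoPow (r : ℕ) : ℕ → ℕ := fun i => if i < r then 2 else 0

/-- The hook partition `(a, 1^b)`. -/
def hookPart (a b : ℕ) : ℕ → ℕ := fun i => if i = 0 then a else if i ≤ b then 1 else 0

/-- The partitions of `N` with `λ₁ ≤ 2` or `2(N − p(λ)) < N` (the nilpotent
`SL_N`-orbits with defective secant variety). -/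
def defectiveSL (N : ℕ) : Set (ℕ → ℕ) :=
  {f | IsPartitionOf N f ∧ (f 0 ≤ 2 ∨ 2 * (N - numParts N f) < N)}

theorem Dominates.antisymm {f g : ℕ → ℕ} (hfg : Dominates f g) (hgf : Dominates g f) : f = g := by
  funext i
  have h := le_antisymm (hfg i) (hgf i)
  have h' := le_antisymm (hfg (i + 1)) (hgf (i + 1))
  rw [Finset.sum_range_succ, Finset.sum_range_succ] at h'
  omega

theorem Dominates.trans {f g h : ℕ → ℕ} (hfg : Dominates f g) (hgh : Dominates g h) :
    Dominates f h :=
  fun m => (hfg m).trans (hgh m)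

/-- A dominating antichain contained in `P` is the set of maximal elements of `P`. -/
theorem maximalsIn_eq_of_antichain {P S : Set (ℕ → ℕ)} (hSP : S ⊆ P)
    (hdom : ∀ f ∈ P, ∃ s ∈ S, Dominates f s)
    (hanti : ∀ s ∈ S, ∀ t ∈ S, Dominates s t → s = t) : maximalsIn P = S := by
  ext f
  constructor
  · rintro ⟨hf, hmax⟩
    obtain ⟨s, hs, hfs⟩ := hdom f hf
    rwa [hmax s (hSP hs) hfs]
  · intro hf
    refine ⟨hSP hf, fun g hg hfg => ?_⟩
    obtain ⟨s, hs, hgs⟩ := hdom g hg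
    obtain rfl := hanti f hf s hs (hfg.trans hgs)
    exact hfg.antisymm hgs

theorem sum_range_le_of_antitone_of_eq_zero {f : ℕ → ℕ} (hf : Antitone f) {k : ℕ}
    (hk : f k = 0) (m : ℕ) : ∑ i ∈ Finset.range m, f i ≤ ∑ i ∈ Finset.range k, f i := by
  induction m with
  | zero => simp
  | succ m ih =>
    rcases le_or_gt k m with h | h
    · have := hf h
      rw [Finset.sum_range_succ]
      omega
    · exact Finset.sum_le_sum_of_subset (Finset.range_subset_range.2 h)

theorem IsPartitionOf.sum_range_le {N : ℕ} {f : ℕ → ℕ} (hf : IsPartitionOf N f) (m : ℕ) :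
    ∑ i ∈ Finset.range m, f i ≤ N :=
  (sum_range_le_of_antitone_of_eq_zero hf.1 hf.2.1 m).trans_eq hf.2.2

theorem lt_numParts_iff {N : ℕ} {f : ℕ → ℕ} (hf : IsPartitionOf N f) (k : ℕ) :
    k < numParts N f ↔ f k ≠ 0 := by
  constructor
  · intro h hk
    refine absurd h (not_lt.2 ?_)
    calc numParts N f ≤ (Finset.range k).card := by
          refine Finset.card_le_card fun i hi => ?_
          rw [Finset.mem_filter] at hi
          by_contra hik
          have := hf.1 (not_lt.1 (mt Finset.mem_range.2 hik))
          omega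
      _ = k := Finset.card_range k
  · intro hk
    have hkN : k < N := by
      by_contra h
      have := hf.1 (not_lt.1 h)
      have := hf.2.1
      omega
    calc k < (Finset.range (k + 1)).card := by simp
      _ ≤ numParts N f := by
          refine Finset.card_le_card fun i hi => ?_
          have hik := Finset.mem_range.1 hi
          have := hf.1 (Nat.le_of_lt_succ hik)
          exact Finset.mem_filter.2 ⟨Finset.mem_range.2 (by omega), by omega⟩

theorem sum_range_succ_hookPart (a b m : ℕ) :
    ∑ i ∈ Finset.range (m + 1), hookPart a b i = a + min m b := by
  induction m with
  | zero => simp [hookPart]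
  | succ m ih =>
    rw [Finset.sum_range_succ, ih]
    simp only [hookPart, Nat.add_eq_zero_iff, one_ne_zero, and_false, if_false]
    split_ifs <;> omega

theorem sum_range_twoPow (r m : ℕ) :
    ∑ i ∈ Finset.range m, twoPow r i = 2 * min m r := by
  induction m with
  | zero => simp
  | succ m ih =>
    rw [Finset.sum_range_succ, ih]
    simp only [twoPow]
    split_ifs <;> omega

theorem isPartitionOf_hookPart {a : ℕ} (ha : 1 ≤ a) (b : ℕ) :
    IsPartitionOf (a + b) (hookPart a b) := by
  refine ⟨fun i j hij => ?_, ?_, ?_⟩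
  · simp only [hookPart]
    split_ifs <;> omega
  · simp only [hookPart]
    split_ifs <;> omega
  · obtain ⟨c, rfl⟩ := Nat.exists_eq_add_of_le' ha
    rw [show c + 1 + b = (c + b) + 1 by omega, sum_range_succ_hookPart]
    omega

theorem isPartitionOf_twoPow (r : ℕ) : IsPartitionOf (2 * r) (twoPow r) := by
  refine ⟨fun i j hij => ?_, ?_, ?_⟩
  · simp only [twoPow]
    split_ifs <;> omega
  · simp only [twoPow]
    split_ifs <;> omega
  · rw [sum_range_twoPow]
    omega

theorem IsPartitionOf.dominates_hookPart {a b : ℕ} {f : ℕ → ℕ} (hf : IsPartitionOf (a + b) f)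
    (hb : f b ≠ 0) : Dominates f (hookPart a b) := by
  rintro (_ | m)
  · simp
  rw [sum_range_succ_hookPart]
  rcases le_total b m with h | h
  · have := hf.sum_range_le (m + 1)
    omega
  · obtain ⟨d, rfl⟩ := Nat.exists_eq_add_of_le h
    have hsum := hf.sum_range_le (m + 1 + d)
    rw [Finset.sum_range_add] at hsum
    have hd : d ≤ ∑ i ∈ Finset.range d, f (m + 1 + i) := by
      calc d = ∑ i ∈ Finset.range d, 1 := by simp
        _ ≤ _ := Finset.sum_le_sum fun i hi => by
          have hid := Finset.mem_range.1 hi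
          have := hf.1 (show m + 1 + i ≤ m + d by omega)
          omega
    omega

theorem sum_range_le_two_mul {f : ℕ → ℕ} (hf : Antitone f) (h0 : f 0 ≤ 2) (m : ℕ) :
    ∑ i ∈ Finset.range m, f i ≤ 2 * m := by
  calc ∑ i ∈ Finset.range m, f i ≤ ∑ i ∈ Finset.range m, 2 :=
        Finset.sum_le_sum fun i _ => (hf (Nat.zero_le i)).trans h0
    _ = 2 * m := by simp [mul_comm]

theorem IsPartitionOf.dominates_twoPow {r : ℕ} {f : ℕ → ℕ} (hf : IsPartitionOf (2 * r) f)
    (h0 : f 0 ≤ 2) : Dominates f (twoPow r) := by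
  intro m
  have := hf.sum_range_le m
  have := sum_range_le_two_mul hf.1 h0 m
  rw [sum_range_twoPow]
  omega

theorem IsPartitionOf.apply_ne_zero_of_two_mul_lt {N n : ℕ} {f : ℕ → ℕ} (hf : IsPartitionOf N f)
    (h0 : f 0 ≤ 2) (hn : 2 * n < N) : f n ≠ 0 := by
  intro h
  have := sum_range_le_of_antitone_of_eq_zero hf.1 h N
  have := sum_range_le_two_mul hf.1 h0 n
  have := hf.2.2
  omega

theorem mem_defectiveSL_even {n : ℕ} (hn : 1 ≤ n) {f : ℕ → ℕ} :
    f ∈ defectiveSL (2 * n) ↔ IsPartitionOf (2 * n) f ∧ (f 0 ≤ 2 ∨ f n ≠ 0) := by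
  refine and_congr_right fun hf => or_congr_right ?_
  rw [← lt_numParts_iff hf]
  omega

theorem mem_defectiveSL_odd {n : ℕ} {f : ℕ → ℕ} :
    f ∈ defectiveSL (2 * n + 1) ↔ IsPartitionOf (2 * n + 1) f ∧ f n ≠ 0 := by
  refine and_congr_right fun hf => ?_
  have h : 2 * (2 * n + 1 - numParts (2 * n + 1) f) < 2 * n + 1 ↔ f n ≠ 0 := by
    rw [← lt_numParts_iff hf]
    omega
  rw [h, or_iff_right_iff_imp]
  exact fun h0 => hf.apply_ne_zero_of_two_mul_lt h0 (by omega)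

theorem twoPow_mem_defectiveSL {n : ℕ} (hn : 1 ≤ n) : twoPow n ∈ defectiveSL (2 * n) :=
  (mem_defectiveSL_even hn).2 ⟨isPartitionOf_twoPow n, Or.inl <| by
    simp only [twoPow]
    split_ifs <;> omega⟩

theorem maximalsIn_defectiveSL_four : maximalsIn (defectiveSL 4) = {twoPow 2} := by
  refine maximalsIn_eq_of_antichain ?_ ?_ ?_
  · exact Set.singleton_subset_iff.2 (twoPow_mem_defectiveSL (n := 2) (by norm_num))
  · intro f hf
    obtain ⟨hp, h⟩ := (mem_defectiveSL_even (n := 2) (by norm_num)).1 hf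
    refine ⟨_, rfl, hp.dominates_twoPow (h.elim id fun h2 => ?_)⟩
    simpa [hookPart] using IsPartitionOf.dominates_hookPart (a := 2) (b := 2) hp h2 1
  · rintro s rfl t rfl -
    rfl

theorem maximalsIn_defectiveSL_even {n : ℕ} (hn : 3 ≤ n) :
    maximalsIn (defectiveSL (2 * n)) = {twoPow n, hookPart n n} := by
  refine maximalsIn_eq_of_antichain ?_ ?_ ?_
  · rintro f (rfl | rfl)
    · exact twoPow_mem_defectiveSL (by omega)
    · refine (mem_defectiveSL_even (by omega)).2 ⟨?_, Or.inr ?_⟩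
      · rw [two_mul]
        exact isPartitionOf_hookPart (by omega) n
      · simp only [hookPart]
        split_ifs <;> omega
  · intro f hf
    obtain ⟨hp, h0 | hne⟩ := (mem_defectiveSL_even (by omega)).1 hf
    · exact ⟨_, Or.inl rfl, hp.dominates_twoPow h0⟩
    · rw [two_mul] at hp
      exact ⟨_, Or.inr rfl, hp.dominates_hookPart hne⟩
  · rintro s (rfl | rfl) t (rfl | rfl) hst
    · rfl
    · have h := hst (n - 1 + 1)
      rw [sum_range_twoPow, sum_range_succ_hookPart] at h
      omega
    · have h := hst (0 + 1)
      rw [sum_range_twoPow, sum_range_succ_hookPart] at h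
      omega
    · rfl

theorem maximalsIn_defectiveSL_odd (n : ℕ) :
    maximalsIn (defectiveSL (2 * n + 1)) = {hookPart (n + 1) n} := by
  have hN : 2 * n + 1 = n + 1 + n := by omega
  refine maximalsIn_eq_of_antichain ?_ ?_ ?_
  · refine Set.singleton_subset_iff.2 (mem_defectiveSL_odd.2 ⟨?_, ?_⟩)
    · rw [hN]
      exact isPartitionOf_hookPart (by omega) n
    · simp only [hookPart]
      split_ifs <;> omega
  · intro f hf
    obtain ⟨hp, hne⟩ := mem_defectiveSL_odd.1 hf
    rw [hN] at hp
    exact ⟨_, rfl, hp.dominates_hookPart hne⟩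
  · rintro s rfl t rfl -
    rfl

/-- The maximal defective nilpotent `SL_N`-orbits: `(2,2)` for `N = 4`; `(2^n)` and
`(n, 1^n)` for `N = 2n ≥ 6`; `(n+1, 1^n)` for `N = 2n+1 ≥ 5`. -/
theorem stmt10 (N : ℕ) (hN : 4 ≤ N) :
    (N = 4 → maximalsIn (defectiveSL N) = {twoPow 2}) ∧
    (∀ n : ℕ, N = 2 * n → 6 ≤ N →
      maximalsIn (defectiveSL N) = {twoPow n, hookPart n n}) ∧
    (∀ n : ℕ, N = 2 * n + 1 → 5 ≤ N →
      maximalsIn (defectiveSL N) = {hookPart (n + 1) n}) := by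
  refine ⟨?_, ?_, ?_⟩
  · rintro rfl
    exact maximalsIn_defectiveSL_four
  · rintro n rfl h
    exact maximalsIn_defectiveSL_even (by omega)
  · rintro n rfl -
    exact maximalsIn_defectiveSL_odd n
end
end
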